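/- arXiv:1710.00640 — 12 statements merged into one kernel-verified Lean document; each statement's English description precedes it below -/
import Mathlib

section
/- For every natural number n ≥ 2, there is no continuous function r : ℂⁿ → ℂ such that for every (a₀, …, a_{n−1}) ∈ ℂⁿ, the value r(a₀, …, a_{n−1}) is a root of the polynomial zⁿ + a_{n−1}z^{n−1} + … + a₁z + a₀. -/
/-- For every `n ≥ 2`, there is no continuous function `r : ℂⁿ → ℂ` such that
`r (a₀, …, a_{n−1})` is a root of `zⁿ + a_{n−1}z^{n−1} + … + a₁z + a₀` for all coefficient
tuples. -/
theorem no_continuous_root_complex (n : ℕ) (hn : 2 ≤ n) :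
    ¬ ∃ r : (Fin n → ℂ) → ℂ, Continuous r ∧
      ∀ a : Fin n → ℂ, (r a) ^ n + ∑ i : Fin n, a i * (r a) ^ (i : ℕ) = 0 := by
  rintro ⟨r, hr, hroot⟩
  have hn0 : n ≠ 0 := by omega
  have hnC : (n : ℂ) ≠ 0 := by exact_mod_cast hn0
  let z : Fin n := ⟨0, by omega⟩
  let s : ℂ → ℂ := fun w => r (Pi.single z (-w))
  have hs : Continuous s := hr.comp ((continuous_single z).comp continuous_neg)
  have hsn : ∀ w, s w ^ n = w := by
    intro w
    have h := hroot (Pi.single z (-w))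
    rw [Finset.sum_eq_single z] at h
    · simp only [Pi.single_eq_same, z, pow_zero, mul_one] at h
      exact eq_of_sub_eq_zero (by rw [sub_eq_add_neg]; exact h)
    · intro b _ hb
      simp [Pi.single_eq_of_ne hb]
    · simp
  let h : ℝ → ℂ := fun t => s (Complex.exp (t * Complex.I)) * Complex.exp (-(t * Complex.I / n))
  have hc : Continuous h := by
    have := hs
    fun_prop
  have hpow : ∀ t, h t ^ n = 1 := by
    intro t
    simp only [h]
    rw [mul_pow, hsn, ← Complex.exp_nat_mul, ← Complex.exp_add]
    rw [show (t * Complex.I + n * -(t * Complex.I / n) : ℂ) = 0 by field_simp; ring]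
    exact Complex.exp_zero
  have hfin : {x : ℂ | x ^ n = 1}.Finite := by
    refine (Polynomial.nthRoots n (1 : ℂ)).toFinset.finite_toSet.subset ?_
    intro x hx
    simpa [Polynomial.mem_nthRoots (Nat.pos_of_ne_zero hn0)] using hx
  have hsub : (Set.range h).Subsingleton := by
    refine hfin.countable.isTotallyDisconnected _ ?_ (isPreconnected_range hc)
    rintro _ ⟨t, rfl⟩
    exact hpow t
  have heq : h (2 * Real.pi) = h 0 := hsub ⟨_, rfl⟩ ⟨_, rfl⟩
  have hne : s 1 ≠ 0 := by
    intro h0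
    have := hsn 1
    rw [h0, zero_pow hn0] at this
    exact zero_ne_one this
  simp only [h] at heq
  push_cast at heq
  rw [Complex.exp_two_pi_mul_I] at heq
  simp only [zero_mul, Complex.exp_zero, zero_div, neg_zero, mul_one] at heq
  have h1 : Complex.exp (2 * Real.pi * Complex.I / n) = 1 := by
    have := mul_left_cancel₀ hne (heq.trans (mul_one _).symm)
    rwa [Complex.exp_neg, inv_eq_one] at this
  have hp := Complex.isPrimitiveRoot_exp n hn0
  rw [h1] at hp
  have := hp.unique IsPrimitiveRoot.one
  omega
end

section
/- For every natural number n ≥ 4, there is no continuous function r : ℝⁿ → ℂ such that for every (a₀, …, a_{n−1}) ∈ ℝⁿ, the value r(a₀, …, a_{n−1}) is a root of the polynomial zⁿ + a_{n−1}z^{n−1} + … + a₁z + a₀. -/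
open Polynomial in
theorem ncr_lift (n : ℕ) (r : (Fin n → ℝ) → ℂ)
    (h : ∀ a : Fin n → ℝ, (r a) ^ n + ∑ i : Fin n, (a i : ℂ) * (r a) ^ (i : ℕ) = 0)
    (p : ℝ[X]) (hp : p.Monic) (hd : p.natDegree = n) :
    aeval (r fun i => p.coeff i) p = 0 := by
  have h1 := h (fun i => p.coeff i)
  set z := r fun i => p.coeff i
  rw [← h1]
  conv_lhs => rw [hp.as_sum]
  simp only [map_add, map_pow, aeval_X, map_sum, map_mul, aeval_C, hd]
  rw [Finset.sum_range]
  rfl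

/-- periodic m-th roots -/
theorem ncr_root (m : ℕ) (hm : 2 ≤ m) (w : ℝ → ℂ) (hw : Continuous w)
    (hper : w 0 = w (2 * Real.pi))
    (h : ∀ θ ∈ Set.Icc (0:ℝ) (2 * Real.pi), w θ ^ m = Complex.exp (θ * Complex.I)) : False := by
  have hpi := Real.pi_pos
  have hm0 : (m : ℂ) ≠ 0 := by
    have : m ≠ 0 := by omega
    exact_mod_cast this
  let g : ℝ → ℂ := fun θ => w θ * Complex.exp (-(θ * Complex.I / m))
  have hg : Continuous g := by fun_prop
  have hgm : ∀ θ ∈ Set.Icc (0:ℝ) (2 * Real.pi), g θ ^ m = 1 := by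
    intro θ hθ
    simp only [g, mul_pow, h θ hθ, ← Complex.exp_nat_mul, ← Complex.exp_add]
    rw [Complex.exp_eq_one_iff]
    refine ⟨0, ?_⟩
    field_simp
    simp
  have hfin : Set.Finite {z : ℂ | z ^ m = 1} := by
    have : {z : ℂ | z ^ m = 1} ⊆ ((Polynomial.nthRootsFinset m (1:ℂ) : Finset ℂ) : Set ℂ) := by
      intro z hz
      simp only [Finset.mem_coe]
      rw [Polynomial.mem_nthRootsFinset (by omega)]
      exact hz
    exact (Finset.finite_toSet _).subset this
  have hconst : g 0 = g (2 * Real.pi) := by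
    have hc : IsPreconnected (g '' Set.Icc (0:ℝ) (2 * Real.pi)) :=
      isPreconnected_Icc.image _ hg.continuousOn
    have hs : (g '' Set.Icc (0:ℝ) (2 * Real.pi)).Subsingleton := by
      refine hfin.countable.isTotallyDisconnected _ ?_ hc
      rintro _ ⟨θ, hθ, rfl⟩
      exact hgm θ hθ
    exact hs ⟨0, ⟨le_rfl, by positivity⟩, rfl⟩ ⟨2 * Real.pi, ⟨by positivity, le_rfl⟩, rfl⟩
  have hw0 : w 0 ≠ 0 := by
    intro h0
    have := h 0 ⟨le_rfl, by positivity⟩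
    rw [h0, zero_pow (by omega)] at this
    exact Complex.exp_ne_zero _ this.symm
  simp only [g, ← hper] at hconst
  have h2 := mul_left_cancel₀ hw0 hconst
  simp only [Complex.ofReal_zero, zero_mul, zero_div, neg_zero, Complex.exp_zero] at h2
  obtain ⟨k, hk⟩ := Complex.exp_eq_one_iff.1 h2.symm
  have hpc : (Real.pi : ℂ) ≠ 0 := by exact_mod_cast hpi.ne'
  have hI := Complex.I_ne_zero
  push_cast at hk
  field_simp at hk
  have hk2 : (-1 : ℤ) = k * m ∨ (-1 : ℤ) = m * k := by
    left
    have : ((-1 : ℤ) : ℂ) = ((k * m : ℤ) : ℂ) := by push_cast; linear_combination hk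
    exact_mod_cast this
  have hdvd : (m : ℤ) ∣ 1 := by
    rcases hk2 with h | h
    · exact ⟨-k, by linarith⟩
    · exact ⟨-k, by linarith⟩
  have := Int.le_of_dvd one_pos hdvd
  omega

theorem ncr_norm_one {m : ℕ} (hm : 2 ≤ m) {z : ℂ} {θ : ℝ}
    (h : z ^ m = Complex.exp (θ * Complex.I)) : z.re ^ 2 + z.im ^ 2 = 1 := by
  have h1 : ‖z‖ ^ m = 1 := by rw [← norm_pow, h, Complex.norm_exp_ofReal_mul_I]
  have h2 : ‖z‖ = 1 := (pow_eq_one_iff_of_nonneg (norm_nonneg _) (by omega)).1 h1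
  have h3 := Complex.sq_norm z
  rw [h2, Complex.normSq_apply] at h3
  nlinarith

theorem ncr_cloud (m : ℕ) (hm : 2 ≤ m) (ρ : ℝ → ℂ) (hρ : Continuous ρ)
    (hper : ρ 0 = ρ (2 * Real.pi))
    (h : ∀ θ : ℝ, (1 + Complex.I * ρ θ) ^ m = Complex.exp (θ * Complex.I) ∨
      (1 - Complex.I * ρ θ) ^ m = Complex.exp ((-θ : ℝ) * Complex.I)) : False := by
  have hpi := Real.pi_pos
  let A : Set ℝ := {θ | (1 + Complex.I * ρ θ) ^ m = Complex.exp (θ * Complex.I)}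
  let B : Set ℝ := {θ | (1 - Complex.I * ρ θ) ^ m = Complex.exp ((-θ : ℝ) * Complex.I)}
  have hA : IsClosed A := isClosed_eq (by fun_prop) (by fun_prop)
  have hB : IsClosed B := isClosed_eq (by fun_prop) (by fun_prop)
  have hcl : closure (Set.Ioo 0 (2 * Real.pi)) = Set.Icc 0 (2 * Real.pi) :=
    closure_Ioo (by positivity)
  have key : Set.Ioo 0 (2 * Real.pi) ⊆ A ∨ Set.Ioo 0 (2 * Real.pi) ⊆ B := by
    have hd : Set.Ioo 0 (2 * Real.pi) ∩ (A ∩ B) = ∅ := by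
      ext θ
      simp only [Set.mem_inter_iff, Set.mem_empty_iff_false, iff_false]
      rintro ⟨⟨h0, h1⟩, ha, hb⟩
      have ea := ncr_norm_one hm ha
      have eb := ncr_norm_one hm hb
      simp at ea eb
      have hz : ρ θ = 0 := by
        apply Complex.ext
        · simp; nlinarith [sq_nonneg (ρ θ).re, sq_nonneg (ρ θ).im]
        · simp; nlinarith [sq_nonneg (ρ θ).re, sq_nonneg (ρ θ).im]
      have ha' : (1 + Complex.I * ρ θ) ^ m = Complex.exp (θ * Complex.I) := ha
      rw [hz] at ha'
      simp at ha'
      obtain ⟨k, hk⟩ := Complex.exp_eq_one_iff.1 ha'.symm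
      have hk' : θ = k * (2 * Real.pi) := by
        have := congrArg Complex.im hk
        simpa using this
      have k0 : (0:ℝ) < k := by
        by_contra hc
        nlinarith
      have k1 : (k:ℝ) < 1 := by
        by_contra hc
        nlinarith
      have k0' : 0 < k := by exact_mod_cast k0
      have k1' : k < 1 := by exact_mod_cast k1
      omega
    exact isPreconnected_iff_subset_of_disjoint_closed.1 isPreconnected_Ioo _ _ hA hB (fun θ _ => h θ) hd
  rcases key with k | k
  · have k' := closure_minimal k hA
    rw [hcl] at k'
    exact ncr_root m hm (fun θ => 1 + Complex.I * ρ θ) (by fun_prop) (by simp [hper]) k'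
  · have k' := closure_minimal k hB
    rw [hcl] at k'
    refine ncr_root m hm (fun θ => (starRingEnd ℂ) (1 - Complex.I * ρ θ)) ?_ (by simp [hper]) ?_
    · exact Complex.continuous_conj.comp (by fun_prop)
    · intro θ hθ
      have := k' hθ
      have h2 : (1 - Complex.I * ρ θ) ^ m = Complex.exp ((-θ : ℝ) * Complex.I) := this
      rw [← map_pow, h2, ← Complex.exp_conj]
      simp

open Polynomial in
theorem ncr_UV (m : ℕ) : ∃ U V : ℝ[X],
    (∀ z : ℂ, aeval z U + Complex.I * aeval z V = (1 + Complex.I * z) ^ m) ∧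
    (∀ z : ℂ, aeval z U - Complex.I * aeval z V = (1 - Complex.I * z) ^ m) ∧
    U.natDegree ≤ m ∧ V.natDegree ≤ m ∧
    ∃ c : ℝ, 0 ≤ c ∧ ∃ A B D : ℝ[X], U = 1 + X ^ 2 * (-C c + X * A) ∧ V = X * (C (m : ℝ) + X * B) ∧
      (1 + X ^ 2) ^ m = 1 + X ^ 2 * (C (m : ℝ) + X * D) := by
  induction m with
  | zero =>
    refine ⟨1, 0, by simp, by simp, by simp, by simp, 0, le_rfl, 0, 0, 0, by simp, by simp, by simp⟩
  | succ m ih =>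
    obtain ⟨U, V, h1, h2, h3, h4, c, hc, A, B, D, hU, hV, hD⟩ := ih
    refine ⟨U - X * V, V + X * U, ?_, ?_, ?_, ?_, c + m, by positivity, A - B,
      B + X * (-C c + X * A), X * (C (m : ℝ) + X * D) + D, ?_, ?_, ?_⟩
    · intro z
      rw [pow_succ, ← h1]
      simp
      linear_combination (-z * aeval z V) * Complex.I_sq
    · intro z
      rw [pow_succ, ← h2]
      simp
      linear_combination (-z * aeval z V) * Complex.I_sq
    · refine (natDegree_sub_le _ _).trans (max_le (by omega) ?_)
      refine natDegree_mul_le.trans ?_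
      rw [natDegree_X]; omega
    · refine (natDegree_add_le _ _).trans (max_le (by omega) ?_)
      refine natDegree_mul_le.trans ?_
      rw [natDegree_X]; omega
    · rw [C_add]; linear_combination hU - X * hV
    · push_cast; rw [C_add, C_1]; linear_combination hV + X * hU
    · push_cast; rw [C_add, C_1, pow_succ, hD]; ring

open Polynomial in
theorem ncr_family (m : ℕ) (hm : 2 ≤ m) : ∃ (P : ℝ → ℝ[X]) (T : ℝ[X]),
    (∀ θ, (P θ).Monic) ∧ (∀ θ, (P θ).natDegree = 2 * m) ∧
    (∀ k, Continuous fun θ => (P θ).coeff k) ∧ P 0 = P (2 * Real.pi) ∧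
    (∀ θ, ∀ z : ℂ, aeval z (P θ) = 0 → (1 + Complex.I * z) ^ m = Complex.exp (θ * Complex.I) ∨
      (1 - Complex.I * z) ^ m = Complex.exp ((-θ : ℝ) * Complex.I)) ∧
    P 0 = X ^ 2 * T ∧ (∀ x : ℝ, aeval (x : ℂ) T ≠ 0) := by
  obtain ⟨U, V, h1, h2, h3, h4, c, hc, A, B, D, hU, hV, hD⟩ := ncr_UV m
  let P : ℝ → ℝ[X] := fun θ =>
    (1 + X ^ 2) ^ m + (1 - C (2 * Real.cos θ) * U - C (2 * Real.sin θ) * V)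
  have hM2 : (1 + X ^ 2 : ℝ[X]).Monic := by
    rw [add_comm]; simpa using monic_X_pow_add_C (1:ℝ) (n := 2) (by norm_num)
  have hdg : (1 + X ^ 2 : ℝ[X]).natDegree = 2 := by
    rw [add_comm]; simpa using natDegree_X_pow_add_C (n := 2) (r := (1:ℝ))
  have hM := hM2.pow m
  have hMd : ((1 + X ^ 2 : ℝ[X]) ^ m).natDegree = 2 * m := by
    rw [hM2.natDegree_pow, hdg, mul_comm]
  have hlow : ∀ θ, (1 - C (2 * Real.cos θ) * U - C (2 * Real.sin θ) * V).natDegree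
      < ((1 + X ^ 2 : ℝ[X]) ^ m).natDegree := by
    intro θ
    rw [hMd]
    have e1 := (natDegree_C_mul_le (2 * Real.cos θ) U).trans h3
    have e2 := (natDegree_C_mul_le (2 * Real.sin θ) V).trans h4
    have : (1 - C (2 * Real.cos θ) * U - C (2 * Real.sin θ) * V).natDegree ≤ m := by
      refine (natDegree_sub_le _ _).trans (max_le ((natDegree_sub_le _ _).trans (max_le ?_ e1)) e2)
      simp
    omega
  have hroot : ∀ θ, ∀ z : ℂ, aeval z (P θ) = 0 →
      (1 + Complex.I * z) ^ m = Complex.exp (θ * Complex.I) ∨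
      (1 - Complex.I * z) ^ m = Complex.exp ((-θ : ℝ) * Complex.I) := by
    intro θ z hz
    have e1 := h1 z
    have e2 := h2 z
    have e3 : (1 + z ^ 2) ^ m = (1 + Complex.I * z) ^ m * (1 - Complex.I * z) ^ m := by
      rw [← mul_pow]; congr 1; linear_combination (z ^ 2) * Complex.I_sq
    have hz' : (1 + z ^ 2) ^ m + (1 - (2 * Complex.cos θ) * aeval z U
        - (2 * Complex.sin θ) * aeval z V) = 0 := by
      simpa [P] using hz
    rw [e3, ← e1, ← e2] at hz'
    rw [← e1, ← e2, ← sub_eq_zero, ← sub_eq_zero (b := Complex.exp ((-θ : ℝ) * Complex.I)),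
      ← mul_eq_zero, ← hz', Complex.exp_mul_I, Complex.exp_mul_I]
    push_cast
    rw [Complex.cos_neg, Complex.sin_neg]
    linear_combination Complex.sin_sq_add_cos_sq (θ : ℂ) +
      (2 * Complex.sin θ * aeval z V - Complex.sin θ ^ 2 - Complex.sin θ ^ 2 * 0) * Complex.I_sq
  let T : ℝ[X] := C (m + 2 * c) + X * (D - 2 * A)
  have hT : P 0 = X ^ 2 * T := by
    simp only [P, T, Real.cos_zero, Real.sin_zero, mul_zero, C_0, zero_mul, hD, hU, mul_one]
    rw [C_add, C_mul]
    have : (C 2 : ℝ[X]) = 2 := rfl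
    rw [this]
    ring
  refine ⟨P, T, fun θ => hM.add_of_left (degree_lt_degree (hlow θ)), fun θ => ?_, ?_, ?_, hroot, hT, ?_⟩
  · rw [← hMd]; exact natDegree_add_eq_left_of_natDegree_lt (hlow θ)
  · intro k
    simp only [P, coeff_add, coeff_sub, coeff_C_mul]
    fun_prop
  · simp [P]
  · intro x hx
    by_cases h0 : x = 0
    · subst h0
      simp [T] at hx
      have : (m : ℝ) + 2 * c = 0 := by
        apply Complex.ofReal_injective
        push_cast
        exact hx
      have hm' : (2:ℝ) ≤ m := by exact_mod_cast hm
      linarith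
    · have hP0 : aeval (x : ℂ) (P 0) = 0 := by rw [hT, map_mul, hx, mul_zero]
      have hx2 : 0 < x ^ 2 := by positivity
      rcases hroot 0 x hP0 with h | h
      · have := ncr_norm_one hm h
        simp at this
        exact h0 this
      · have := ncr_norm_one hm h
        simp at this
        exact h0 this

open Polynomial in
/-- For every `n ≥ 4`, there is no continuous function `r : ℝⁿ → ℂ` such that
`r (a₀, …, a_{n−1})` is a root of `zⁿ + a_{n−1}z^{n−1} + … + a₁z + a₀` for all real coefficient
tuples. -/
theorem no_continuous_root_real (n : ℕ) (hn : 4 ≤ n) :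
    ¬ ∃ r : (Fin n → ℝ) → ℂ, Continuous r ∧
      ∀ a : Fin n → ℝ, (r a) ^ n + ∑ i : Fin n, (a i : ℂ) * (r a) ^ (i : ℕ) = 0 := by
  rintro ⟨r, hr, h⟩
  have hlift := ncr_lift n r h
  rcases Nat.even_or_odd' n with ⟨m, hm | hm⟩
  · have hm2 : 2 ≤ m := by omega
    obtain ⟨P, T, hM, hd, hc, hp, hroot, -, -⟩ := ncr_family m hm2
    refine ncr_cloud m hm2 (fun θ => r fun i => (P θ).coeff i) ?_ (by simp only [hp]) ?_
    · exact hr.comp (continuous_pi fun i => hc i)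
    · intro θ
      exact hroot θ _ (hlift _ (hM θ) (by rw [hd, hm]))
  · have hm2 : 2 ≤ m := by omega
    obtain ⟨P, T, hM, hd, hc, hp, hroot, hT, hT0⟩ := ncr_family m hm2
    have hend : ∀ t : ℝ, t ≠ 0 → (r fun i => (P 0 * (X - C t)).coeff i) = t := by
      intro t ht
      let ρ : ℝ → ℂ := fun θ => r fun i => (P θ * (X - C t)).coeff i
      have hρ : Continuous ρ := by
        refine hr.comp (continuous_pi fun i => ?_)
        simp only [coeff_mul]
        exact continuous_finsetSum _ fun k _ => (hc _).mul continuous_const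
      have hz : ∀ θ, ((1 + Complex.I * ρ θ) ^ m = Complex.exp (θ * Complex.I) ∨
          (1 - Complex.I * ρ θ) ^ m = Complex.exp ((-θ : ℝ) * Complex.I)) ∨ ρ θ = t := by
        intro θ
        have := hlift (P θ * (X - C t)) ((hM θ).mul (monic_X_sub_C t)) (by
          rw [(hM θ).natDegree_mul (monic_X_sub_C t), hd, natDegree_X_sub_C, hm])
        rw [map_mul, mul_eq_zero] at this
        rcases this with h | h
        · exact Or.inl (hroot θ _ h)
        · right
          simpa [sub_eq_zero] using h
      let A : Set ℝ := {θ | (1 + Complex.I * ρ θ) ^ m = Complex.exp (θ * Complex.I)} ∪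
        {θ | (1 - Complex.I * ρ θ) ^ m = Complex.exp ((-θ : ℝ) * Complex.I)}
      let B : Set ℝ := {θ | ρ θ = t}
      have hA : IsClosed A :=
        (isClosed_eq (by fun_prop) (by fun_prop)).union (isClosed_eq (by fun_prop) (by fun_prop))
      have hB : IsClosed B := isClosed_eq hρ continuous_const
      have hdis : Set.univ ∩ (A ∩ B) = ∅ := by
        ext θ
        simp only [Set.mem_inter_iff, Set.mem_empty_iff_false, iff_false]
        rintro ⟨-, ha, hb⟩
        have hb' : ρ θ = t := hb
        rcases ha with ha | ha
        · have := ncr_norm_one hm2 ha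
          rw [hb'] at this
          simp at this
          exact ht this
        · have := ncr_norm_one hm2 ha
          rw [hb'] at this
          simp at this
          exact ht this
      rcases isPreconnected_iff_subset_of_disjoint_closed.1 isPreconnected_univ _ _ hA hB (fun θ _ => hz θ) hdis with k | k
      · exact (ncr_cloud m hm2 ρ hρ (by simp only [ρ, hp]) (fun θ => k (Set.mem_univ θ))).elim
      · exact k (Set.mem_univ 0)
    -- the cubic family
    let K : ℝ → ℝ[X] := fun s => X ^ 3 + (C (-s) * X ^ 2 + C (s ^ 2 - 1) * X)
    have hlow : ∀ s : ℝ, (C (-s) * X ^ 2 + C (s ^ 2 - 1) * X : ℝ[X]).natDegree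
        < (X ^ 3 : ℝ[X]).natDegree := by
      intro s
      rw [natDegree_X_pow]
      refine lt_of_le_of_lt (b := 2) ?_ (by norm_num)
      compute_degree
    have hKM : ∀ s, (K s).Monic := fun s =>
      (monic_X_pow 3).add_of_left (degree_lt_degree (hlow s))
    have hKd : ∀ s, (K s).natDegree = 3 := fun s => by
      have := natDegree_add_eq_left_of_natDegree_lt (hlow s)
      rwa [natDegree_X_pow] at this
    have hTM : T.Monic := by
      have := hM 0
      rw [hT] at this
      exact (monic_X_pow 2).of_mul_monic_left this
    have hTd : 2 + T.natDegree = 2 * m := by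
      have := hd 0
      rwa [hT, (monic_X_pow 2).natDegree_mul hTM, natDegree_X_pow] at this
    let ρ : ℝ → ℂ := fun s => r fun i => (K s * T).coeff i
    have hKc : ∀ k, Continuous fun s => (K s).coeff k := by
      intro k
      simp only [K, coeff_add, coeff_C_mul]
      fun_prop
    have hρ : Continuous ρ := by
      refine hr.comp (continuous_pi fun i => ?_)
      simp only [coeff_mul]
      exact continuous_finsetSum _ fun k _ => (hKc _).mul continuous_const
    have hz : ∀ s, aeval (ρ s) (K s) = 0 ∨ aeval (ρ s) T = 0 := by
      intro s
      have := hlift (K s * T) ((hKM s).mul hTM) (by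
        rw [(hKM s).natDegree_mul hTM, hKd]; omega)
      rwa [map_mul, mul_eq_zero] at this
    have hK0 : ∀ s, ∀ z : ℂ, aeval z (K s) = z ^ 3 + (-s * z ^ 2 + (s ^ 2 - 1) * z) := by
      intro s z
      simp [K]
    have hreal : ∀ s ∈ Set.Icc (-1:ℝ) 1, ∀ z : ℂ, aeval z (K s) = 0 → z.im = 0 := by
      intro s hs z hz
      rw [hK0] at hz
      have : z = 0 ∨ (z - s / 2) ^ 2 = ((1 - 3 * s ^ 2 / 4 : ℝ) : ℂ) := by
        have : z * ((z - s / 2) ^ 2 - ((1 - 3 * s ^ 2 / 4 : ℝ) : ℂ)) = 0 := by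
          push_cast
          linear_combination hz
        rcases mul_eq_zero.1 this with h | h
        · exact Or.inl h
        · exact Or.inr (sub_eq_zero.1 h)
      rcases this with h | h
      · simp [h]
      · have hpos : 0 < 1 - 3 * s ^ 2 / 4 := by nlinarith [hs.1, hs.2]
        have hsq : (((Real.sqrt (1 - 3 * s ^ 2 / 4)) : ℝ) : ℂ) ^ 2
            = ((1 - 3 * s ^ 2 / 4 : ℝ) : ℂ) := by
          rw [← Complex.ofReal_pow, Real.sq_sqrt hpos.le]
        rw [← hsq] at h
        have hs2 : ((s : ℂ) / 2).im = 0 := by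
          have : ((s : ℂ) / 2) = ((s / 2 : ℝ) : ℂ) := by push_cast; rfl
          rw [this, Complex.ofReal_im]
        rcases sq_eq_sq_iff_eq_or_eq_neg.1 h with h | h
        · have := congrArg Complex.im h
          rw [Complex.sub_im, hs2, Complex.ofReal_im] at this
          linarith
        · have := congrArg Complex.im h
          rw [Complex.sub_im, hs2, Complex.neg_im, Complex.ofReal_im] at this
          linarith
    have hKT1 : K 1 * T = P 0 * (X - C 1) := by
      rw [hT]; simp [K]; ring
    have hKT2 : K (-1) * T = P 0 * (X - C (-1)) := by
      rw [hT]; simp [K]; ring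
    have hρ1 : ρ 1 = ((1 : ℝ) : ℂ) := by
      simp only [ρ, hKT1]; exact hend 1 one_ne_zero
    have hρ2 : ρ (-1) = ((-1 : ℝ) : ℂ) := by
      simp only [ρ, hKT2]; exact hend (-1) (by norm_num)
    let A : Set ℝ := {s | aeval (ρ s) (K s) = 0}
    let B : Set ℝ := {s | aeval (ρ s) T = 0}
    have hA : IsClosed A := by
      simp only [A, hK0]
      exact isClosed_eq (by fun_prop) (by fun_prop)
    have hB : IsClosed B := isClosed_eq (T.continuous_aeval.comp hρ) continuous_const
    have hdis : Set.Icc (-1:ℝ) 1 ∩ (A ∩ B) = ∅ := by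
      ext s
      simp only [Set.mem_inter_iff, Set.mem_empty_iff_false, iff_false]
      rintro ⟨hs, ha, hb⟩
      have him := hreal s hs _ ha
      have hb' : aeval (ρ s) T = 0 := hb
      have : ρ s = ((ρ s).re : ℂ) := Complex.ext (by simp) (by simp [him])
      rw [this] at hb'
      exact hT0 _ hb'
    have hall : Set.Icc (-1:ℝ) 1 ⊆ A := by
      rcases isPreconnected_iff_subset_of_disjoint_closed.1 isPreconnected_Icc _ _ hA hB (fun θ _ => hz θ) hdis with k | k
      · exact k
      · exfalso
        have := k (show (1:ℝ) ∈ Set.Icc (-1:ℝ) 1 by norm_num)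
        have h1 : aeval (ρ 1) T = 0 := this
        rw [hρ1] at h1
        exact hT0 _ h1
    let g : ℝ → ℝ := fun s => (ρ s).re - (s - 1) / 4
    have hg : Continuous g := by
      have := Complex.continuous_re.comp hρ
      exact this.sub (by fun_prop)
    have hmem : (0:ℝ) ∈ Set.Icc (g (-1)) (g 1) := by
      simp only [g, hρ1, hρ2, Complex.ofReal_re]
      norm_num
    obtain ⟨s, hs, hgs⟩ := intermediate_value_Icc (by norm_num : (-1:ℝ) ≤ 1) hg.continuousOn hmem
    have hsA : aeval (ρ s) (K s) = 0 := hall hs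
    have him := hreal s hs _ hsA
    have hre : ρ s = (((s - 1) / 4 : ℝ) : ℂ) := by
      apply Complex.ext
      · simp only [g] at hgs
        rw [Complex.ofReal_re]; linarith
      · rw [him, Complex.ofReal_im]
    rw [hK0, hre] at hsA
    have hx : ((s - 1) / 4) ^ 3 + (-s * ((s - 1) / 4) ^ 2 + (s ^ 2 - 1) * ((s - 1) / 4)) = 0 := by
      exact_mod_cast hsA
    have hx' : (s - 1) ^ 2 * (13 * s + 15) = 0 := by linear_combination 64 * hx
    rcases mul_eq_zero.1 hx' with h | h
    · have hs1 : s = 1 := by nlinarith [pow_eq_zero_iff (two_ne_zero) |>.1 h]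
      subst hs1
      rw [hρ1] at hre
      norm_num at hre
    · have := hs.1
      linarith
end

section
/- The function r : ℝ² → ℂ defined by r(a₀, a₁) = −a₁/2 − √(a₁² − 4a₀)/2 when a₁² − 4a₀ ≥ 0, and r(a₀, a₁) = −a₁/2 + i·√(4a₀ − a₁²)/2 when a₁² − 4a₀ < 0, is continuous on ℝ², and r(a₀, a₁)² + a₁·r(a₀, a₁) + a₀ = 0 for every (a₀, a₁) ∈ ℝ². -/
/-- The root of the monic real quadratic `z² + a₁z + a₀` given by
`−a₁/2 − √(a₁² − 4a₀)/2` when `a₁² − 4a₀ ≥ 0` and `−a₁/2 + i·√(4a₀ − a₁²)/2` otherwise. -/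
noncomputable def rQuadMinus : ℝ × ℝ → ℂ := fun p =>
  if p.2 ^ 2 - 4 * p.1 ≥ 0 then
    -(p.2 : ℂ) / 2 - (Real.sqrt (p.2 ^ 2 - 4 * p.1) : ℂ) / 2
  else
    -(p.2 : ℂ) / 2 + Complex.I * (Real.sqrt (4 * p.1 - p.2 ^ 2) : ℂ) / 2

/-- The function `rQuadMinus` is continuous on `ℝ²` and at every `(a₀, a₁)` it takes a value
which is a root of `z² + a₁z + a₀`. -/
theorem rQuadMinus_continuous_root :
    Continuous rQuadMinus ∧
      ∀ a₀ a₁ : ℝ,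
        (rQuadMinus (a₀, a₁)) ^ 2 + (a₁ : ℂ) * rQuadMinus (a₀, a₁) + (a₀ : ℂ) = 0 := by
  constructor
  · have h : rQuadMinus = fun p : ℝ × ℝ =>
        -(p.2 : ℂ) / 2 - (Real.sqrt (p.2 ^ 2 - 4 * p.1) : ℂ) / 2
          + Complex.I * (Real.sqrt (4 * p.1 - p.2 ^ 2) : ℂ) / 2 := by
      funext p
      unfold rQuadMinus
      split_ifs with hp
      · rw [Real.sqrt_eq_zero_of_nonpos (x := 4 * p.1 - p.2 ^ 2) (by linarith)]
        simp
      · rw [Real.sqrt_eq_zero_of_nonpos (x := p.2 ^ 2 - 4 * p.1) (by linarith)]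
        simp
    rw [h]
    fun_prop
  · intro a₀ a₁
    unfold rQuadMinus
    dsimp only
    split_ifs with hp
    · have h2 : ((Real.sqrt (a₁ ^ 2 - 4 * a₀) : ℝ) : ℂ) ^ 2 = (a₁ : ℂ) ^ 2 - 4 * a₀ := by
        exact_mod_cast congrArg Complex.ofReal (Real.sq_sqrt hp)
      linear_combination h2 / 4
    · have h2 : ((Real.sqrt (4 * a₀ - a₁ ^ 2) : ℝ) : ℂ) ^ 2 = 4 * a₀ - (a₁ : ℂ) ^ 2 := by
        exact_mod_cast congrArg Complex.ofReal
          (Real.sq_sqrt (show 0 ≤ 4 * a₀ - a₁ ^ 2 by linarith))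
      linear_combination (-1 / 4) * h2
        + ((Real.sqrt (4 * a₀ - a₁ ^ 2) : ℝ) : ℂ) ^ 2 / 4 * Complex.I_sq
end

section
/- A function r : ℝ² → ℂ is continuous and satisfies r(a₀, a₁)² + a₁·r(a₀, a₁) + a₀ = 0 for every (a₀, a₁) ∈ ℝ² if and only if there exist signs ε, δ ∈ {−1, +1} such that r(a₀, a₁) = −a₁/2 + ε·√(a₁² − 4a₀)/2 whenever a₁² − 4a₀ ≥ 0, and r(a₀, a₁) = −a₁/2 + δ·i·√(4a₀ − a₁²)/2 whenever a₁² − 4a₀ < 0. In particular, the family of monic real quadratics has exactly four continuous roots. -/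
/-- For signs `ε, δ ∈ {−1, +1}`, the root `r_{ε,δ}` of the monic real quadratic
`z² + a₁z + a₀`: it equals `−a₁/2 + ε·√(D)/2` when `D := a₁² − 4a₀ ≥ 0` and
`−a₁/2 + δ·i·√(−D)/2` when `D < 0`. -/
noncomputable def rQuad (ε δ : ℝ) : ℝ × ℝ → ℂ := fun p =>
  if p.2 ^ 2 - 4 * p.1 ≥ 0 then
    -(p.2 : ℂ) / 2 + (ε : ℂ) * (Real.sqrt (p.2 ^ 2 - 4 * p.1) : ℂ) / 2
  else
    -(p.2 : ℂ) / 2 + (δ : ℂ) * Complex.I * (Real.sqrt (4 * p.1 - p.2 ^ 2) : ℂ) / 2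

theorem rQuad_eq (ε δ : ℝ) (p : ℝ × ℝ) : rQuad ε δ p =
    -(p.2 : ℂ) / 2 + (ε : ℂ) * (Real.sqrt (p.2 ^ 2 - 4 * p.1) : ℂ) / 2
      + (δ : ℂ) * Complex.I * (Real.sqrt (4 * p.1 - p.2 ^ 2) : ℂ) / 2 := by
  unfold rQuad
  split_ifs with h
  · rw [Real.sqrt_eq_zero_of_nonpos (x := 4 * p.1 - p.2 ^ 2) (by linarith)]
    simp
  · rw [Real.sqrt_eq_zero_of_nonpos (x := p.2 ^ 2 - 4 * p.1) (by linarith)]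
    simp

theorem sign_exists (S : Set (ℝ × ℝ)) (hS : IsPreconnected S) (f g : ℝ × ℝ → ℂ)
    (hf : Continuous f) (hg : Continuous g) (h : ∀ p ∈ S, f p ^ 2 = g p ^ 2)
    (h0 : ∀ p ∈ S, g p ≠ 0) :
    ∃ ε : ℝ, (ε = -1 ∨ ε = 1) ∧ ∀ p ∈ S, f p = ε * g p := by
  rcases hS.eq_or_eq_neg_of_sq_eq hf.continuousOn hg.continuousOn
    (fun p hp => by simpa using h p hp) (fun {p} hp => h0 p hp) with h1 | h1
  · exact ⟨1, Or.inr rfl, fun p hp => by simpa using h1 hp⟩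
  · exact ⟨-1, Or.inl rfl, fun p hp => by simpa using h1 hp⟩

/-- A function `r : ℝ² → ℂ` is a continuous root of the family of monic real quadratics if and
only if `r = r_{ε,δ}` for some signs `ε, δ ∈ {−1, +1}`. -/
theorem continuous_root_quadratic_real_iff (r : ℝ × ℝ → ℂ) :
    (Continuous r ∧
        ∀ a₀ a₁ : ℝ, (r (a₀, a₁)) ^ 2 + (a₁ : ℂ) * r (a₀, a₁) + (a₀ : ℂ) = 0) ↔
      ∃ ε δ : ℝ, (ε = -1 ∨ ε = 1) ∧ (δ = -1 ∨ δ = 1) ∧ r = rQuad ε δ := by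
  constructor
  · rintro ⟨hc, hr⟩
    -- coordinates (D, b)
    let f : ℝ × ℝ → ℂ := fun q => 2 * r ((q.2 ^ 2 - q.1) / 4, q.2) + (q.2 : ℂ)
    have hf : Continuous f := by fun_prop
    have hf2 : ∀ q, f q ^ 2 = (q.1 : ℂ) := by
      intro q
      have := hr ((q.2 ^ 2 - q.1) / 4) q.2
      push_cast at this
      simp only [f]
      linear_combination 4 * this
    have hfr : ∀ a b : ℝ, r (a, b) = -(b : ℂ) / 2 + f (b ^ 2 - 4 * a, b) / 2 := by
      intro a b
      have : (b ^ 2 - (b ^ 2 - 4 * a)) / 4 = a := by ring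
      simp only [f, this]
      ring
    obtain ⟨ε, hε, h1⟩ := sign_exists (Set.Ioi 0 ×ˢ Set.univ)
      (isPreconnected_Ioi.prod isPreconnected_univ) f (fun q => (Real.sqrt q.1 : ℂ)) hf
      (by fun_prop)
      (by
        rintro q ⟨hq, -⟩
        rw [hf2, ← Complex.ofReal_pow, Real.sq_sqrt (le_of_lt hq)])
      (by
        rintro q ⟨hq, -⟩
        exact Complex.ofReal_ne_zero.2 (Real.sqrt_pos.2 hq).ne')
    obtain ⟨δ, hδ, h2⟩ := sign_exists (Set.Iio 0 ×ˢ Set.univ)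
      (isPreconnected_Iio.prod isPreconnected_univ) f
      (fun q => Complex.I * (Real.sqrt (-q.1) : ℂ)) hf
      (by fun_prop)
      (by
        rintro q ⟨hq, -⟩
        have hq : q.1 < 0 := hq
        rw [hf2, mul_pow, ← Complex.ofReal_pow, Real.sq_sqrt (by linarith)]
        simp)
      (by
        rintro q ⟨hq, -⟩
        have hq : q.1 < 0 := hq
        exact mul_ne_zero Complex.I_ne_zero
          (Complex.ofReal_ne_zero.2 (Real.sqrt_pos.2 (by linarith)).ne'))
    refine ⟨ε, δ, hε, hδ, ?_⟩
    funext ⟨a, b⟩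
    rw [hfr]
    unfold rQuad
    dsimp only
    rcases lt_trichotomy (b ^ 2 - 4 * a) 0 with h | h | h
    · rw [if_neg (by linarith), h2 (b ^ 2 - 4 * a, b) ⟨h, trivial⟩]
      simp only [neg_sub]
      ring
    · rw [if_pos (by linarith)]
      have h3 := hf2 (b ^ 2 - 4 * a, b)
      simp only [h, Complex.ofReal_zero] at h3
      have h4 := pow_eq_zero_iff (two_ne_zero) |>.1 h3
      simp [h, h4]
    · rw [if_pos (by linarith), h1 (b ^ 2 - 4 * a, b) ⟨h, trivial⟩]
  · rintro ⟨ε, δ, hε, hδ, rfl⟩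
    have hε2 : (ε : ℂ) ^ 2 = 1 := by rcases hε with rfl | rfl <;> simp
    have hδ2 : (δ : ℂ) ^ 2 = 1 := by rcases hδ with rfl | rfl <;> simp
    refine ⟨?_, ?_⟩
    · rw [funext (rQuad_eq ε δ)]
      fun_prop
    · intro a b
      unfold rQuad
      dsimp only
      split_ifs with h
      · have h1 : (Real.sqrt (b ^ 2 - 4 * a) : ℂ) ^ 2 = b ^ 2 - 4 * a := by
          rw [← Complex.ofReal_pow, Real.sq_sqrt h]; push_cast; ring
        generalize (Real.sqrt (b ^ 2 - 4 * a) : ℂ) = s at *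
        linear_combination (s ^ 2 / 4) * hε2 + h1 / 4
      · have h1 : (Real.sqrt (4 * a - b ^ 2) : ℂ) ^ 2 = 4 * a - b ^ 2 := by
          rw [← Complex.ofReal_pow, Real.sq_sqrt (by linarith)]; push_cast; ring
        generalize (Real.sqrt (4 * a - b ^ 2) : ℂ) = s at *
        linear_combination (-s ^ 2 / 4) * hδ2 - h1 / 4 + (δ : ℂ) ^ 2 * s ^ 2 / 4 * Complex.I_sq
end

section
/- For any signs ε, δ ∈ {−1, +1}, the pair of functions r_{ε,δ} and r_{−ε,−δ} forms a complete set of continuous roots of the family of monic real quadratics: both functions are continuous, and for all (a₀, a₁) ∈ ℝ² and all z ∈ ℂ, z² + a₁z + a₀ = (z − r_{ε,δ}(a₀,a₁))·(z − r_{−ε,−δ}(a₀,a₁)). -/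
theorem rQuad_eq_aux (ε δ : ℝ) : rQuad ε δ = fun p : ℝ × ℝ =>
    -(p.2 : ℂ) / 2 + (ε : ℂ) * (Real.sqrt (p.2 ^ 2 - 4 * p.1) : ℂ) / 2
      + (δ : ℂ) * Complex.I * (Real.sqrt (4 * p.1 - p.2 ^ 2) : ℂ) / 2 := by
  funext p
  unfold rQuad
  split_ifs with h
  · rw [Real.sqrt_eq_zero_of_nonpos (show 4 * p.1 - p.2 ^ 2 ≤ 0 by linarith)]
    simp
  · rw [Real.sqrt_eq_zero_of_nonpos (show p.2 ^ 2 - 4 * p.1 ≤ 0 by linarith)]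
    simp

theorem rQuad_cont_aux (ε δ : ℝ) : Continuous (rQuad ε δ) := by
  rw [rQuad_eq_aux]
  fun_prop

/-- For any signs `ε, δ ∈ {−1, +1}`, the pair `(r_{ε,δ}, r_{−ε,−δ})` is a complete set of
continuous roots of the family of monic real quadratics. -/
theorem rQuad_complete_set_of_continuous_roots (ε δ : ℝ)
    (hε : ε = -1 ∨ ε = 1) (hδ : δ = -1 ∨ δ = 1) :
    Continuous (rQuad ε δ) ∧ Continuous (rQuad (-ε) (-δ)) ∧
      ∀ a₀ a₁ : ℝ, ∀ z : ℂ,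
        z ^ 2 + (a₁ : ℂ) * z + (a₀ : ℂ) =
          (z - rQuad ε δ (a₀, a₁)) * (z - rQuad (-ε) (-δ) (a₀, a₁)) := by
  refine ⟨rQuad_cont_aux _ _, rQuad_cont_aux _ _, fun a₀ a₁ z => ?_⟩
  have e2 : (ε : ℂ) ^ 2 = 1 := by rcases hε with rfl | rfl <;> norm_num
  have d2 : (δ : ℂ) ^ 2 = 1 := by rcases hδ with rfl | rfl <;> norm_num
  unfold rQuad
  dsimp only
  split_ifs with h
  · have hs : ((Real.sqrt (a₁ ^ 2 - 4 * a₀) : ℝ) : ℂ) ^ 2 = (a₁ : ℂ) ^ 2 - 4 * a₀ := by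
      exact_mod_cast Real.sq_sqrt h
    push_cast
    linear_combination (1 / 4 : ℂ) * (ε : ℂ) ^ 2 * hs + (1 / 4 : ℂ) * ((a₁ : ℂ) ^ 2 - 4 * a₀) * e2
  · have hs : ((Real.sqrt (4 * a₀ - a₁ ^ 2) : ℝ) : ℂ) ^ 2 = 4 * a₀ - (a₁ : ℂ) ^ 2 := by
      exact_mod_cast Real.sq_sqrt (show 0 ≤ 4 * a₀ - a₁ ^ 2 by linarith)
    push_cast
    linear_combination (1 / 4 : ℂ) * (δ : ℂ) ^ 2 * Complex.I ^ 2 * hs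
      + (1 / 4 : ℂ) * (4 * a₀ - (a₁ : ℂ) ^ 2) * Complex.I ^ 2 * d2
      + (1 / 4 : ℂ) * (4 * a₀ - (a₁ : ℂ) ^ 2) * Complex.I_sq
end

section
/- If α, β : ℝ² → ℂ are continuous functions such that z² + a₁z + a₀ = (z − α(a₀,a₁))·(z − β(a₀,a₁)) for all (a₀, a₁) ∈ ℝ² and all z ∈ ℂ, then the unordered pair {α, β} equals either {r_{+1,+1}, r_{−1,−1}} or {r_{−1,+1}, r_{+1,−1}}; that is, the family of monic real quadratics has exactly two complete sets of continuous roots. -/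
theorem sign_aux (s : ℝ × ℝ → ℂ) (hs : Continuous s)
    (hsq : ∀ p : ℝ × ℝ, s p ^ 2 = ((p.2 ^ 2 - 4 * p.1 : ℝ) : ℂ)) :
    (∃ ε : ℝ, (ε = 1 ∨ ε = -1) ∧ ∀ p : ℝ × ℝ, 0 < p.2 ^ 2 - 4 * p.1 →
      s p = (ε : ℂ) * (Real.sqrt (p.2 ^ 2 - 4 * p.1) : ℂ)) ∧
    (∃ δ : ℝ, (δ = 1 ∨ δ = -1) ∧ ∀ p : ℝ × ℝ, p.2 ^ 2 - 4 * p.1 < 0 →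
      s p = (δ : ℂ) * Complex.I * (Real.sqrt (4 * p.1 - p.2 ^ 2) : ℂ)) := by
  have hc : Continuous (fun q : ℝ × ℝ => s ((q.2 ^ 2 - q.1) / 4, q.2)) := by fun_prop
  have hp : ∀ p : ℝ × ℝ, ((p.2 ^ 2 - (p.2 ^ 2 - 4 * p.1)) / 4, p.2) = p := by
    intro p
    ext <;> simp
  constructor
  · have hS : IsPreconnected (Set.Ioi (0 : ℝ) ×ˢ (Set.univ : Set ℝ)) :=
      ((convex_Ioi (0 : ℝ)).prod convex_univ).isPreconnected
    have key := hS.eq_or_eq_neg_of_sq_eq (f := fun q : ℝ × ℝ => s ((q.2 ^ 2 - q.1) / 4, q.2))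
      (g := fun q : ℝ × ℝ => (Real.sqrt q.1 : ℂ)) hc.continuousOn
      (Continuous.continuousOn (by fun_prop))
      (by
        rintro ⟨d, b⟩ ⟨hd, -⟩
        have hd' : 0 < d := hd
        simp only [Pi.pow_apply, hsq]
        rw [← Complex.ofReal_pow, Real.sq_sqrt hd'.le]
        congr 1
        ring)
      (by
        rintro ⟨d, b⟩ ⟨hd, -⟩
        have hd' : 0 < d := hd
        exact_mod_cast (Real.sqrt_pos.2 hd').ne')
    rcases key with key | key
    · refine ⟨1, Or.inl rfl, fun p h => ?_⟩
      have := @key (p.2 ^ 2 - 4 * p.1, p.2) ⟨h, trivial⟩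
      simp only [hp] at this
      simpa using this
    · refine ⟨-1, Or.inr rfl, fun p h => ?_⟩
      have := @key (p.2 ^ 2 - 4 * p.1, p.2) ⟨h, trivial⟩
      simp only [hp, Pi.neg_apply] at this
      simpa using this
  · have hS : IsPreconnected (Set.Iio (0 : ℝ) ×ˢ (Set.univ : Set ℝ)) :=
      ((convex_Iio (0 : ℝ)).prod convex_univ).isPreconnected
    have key := hS.eq_or_eq_neg_of_sq_eq (f := fun q : ℝ × ℝ => s ((q.2 ^ 2 - q.1) / 4, q.2))
      (g := fun q : ℝ × ℝ => Complex.I * (Real.sqrt (-q.1) : ℂ)) hc.continuousOn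
      (Continuous.continuousOn (by fun_prop))
      (by
        rintro ⟨d, b⟩ ⟨hd, -⟩
        have hd' : d < 0 := hd
        simp only [Pi.pow_apply, hsq]
        rw [mul_pow, ← Complex.ofReal_pow, Real.sq_sqrt (by linarith), Complex.I_sq]
        push_cast
        ring)
      (by
        rintro ⟨d, b⟩ ⟨hd, -⟩
        have hd' : d < 0 := hd
        refine mul_ne_zero Complex.I_ne_zero ?_
        exact_mod_cast (Real.sqrt_pos.2 (by linarith : 0 < -d)).ne')
    rcases key with key | key
    · refine ⟨1, Or.inl rfl, fun p h => ?_⟩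
      have := @key (p.2 ^ 2 - 4 * p.1, p.2) ⟨h, trivial⟩
      simp only [hp] at this
      simpa using this
    · refine ⟨-1, Or.inr rfl, fun p h => ?_⟩
      have := @key (p.2 ^ 2 - 4 * p.1, p.2) ⟨h, trivial⟩
      simp only [hp, Pi.neg_apply] at this
      simpa using this

/-- If continuous `α, β : ℝ² → ℂ` give a full factorization of every monic real quadratic,
then the unordered pair `{α, β}` is `{r_{1,1}, r_{−1,−1}}` or `{r_{−1,1}, r_{1,−1}}`: the family
of monic real quadratics has exactly two complete sets of continuous roots. -/
theorem complete_sets_of_continuous_roots_quadratic_real (α β : ℝ × ℝ → ℂ)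
    (hα : Continuous α) (hβ : Continuous β)
    (hfac : ∀ a₀ a₁ : ℝ, ∀ z : ℂ,
      z ^ 2 + (a₁ : ℂ) * z + (a₀ : ℂ) = (z - α (a₀, a₁)) * (z - β (a₀, a₁))) :
    ({α, β} : Set (ℝ × ℝ → ℂ)) = {rQuad 1 1, rQuad (-1) (-1)} ∨
      ({α, β} : Set (ℝ × ℝ → ℂ)) = {rQuad (-1) 1, rQuad 1 (-1)} := by
  have hsum : ∀ p : ℝ × ℝ, α p + β p = -(p.2 : ℂ) := by
    rintro ⟨a, b⟩
    have h0 := hfac a b 0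
    have h1 := hfac a b 1
    linear_combination h1 - h0
  have hprod : ∀ p : ℝ × ℝ, α p * β p = (p.1 : ℂ) := by
    rintro ⟨a, b⟩
    have h0 := hfac a b 0
    linear_combination -h0
  have hsq : ∀ p : ℝ × ℝ, (α p - β p) ^ 2 = ((p.2 ^ 2 - 4 * p.1 : ℝ) : ℂ) := by
    intro p
    push_cast
    linear_combination (α p + β p - (p.2 : ℂ)) * hsum p - 4 * hprod p
  obtain ⟨⟨ε, hε, h1⟩, ⟨δ, hδ, h2⟩⟩ := sign_aux (fun p => α p - β p) (hα.sub hβ) hsq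
  have hz : ∀ p : ℝ × ℝ, p.2 ^ 2 - 4 * p.1 = 0 → α p - β p = 0 := by
    intro p h
    have := hsq p
    rw [h] at this
    simpa using this
  have hs : ∀ p : ℝ × ℝ, 0 ≤ p.2 ^ 2 - 4 * p.1 →
      α p - β p = (ε : ℂ) * (Real.sqrt (p.2 ^ 2 - 4 * p.1) : ℂ) := by
    intro p h
    rcases h.eq_or_lt with h | h
    · rw [hz p h.symm, ← h]
      simp
    · exact h1 p h
  have ha : α = rQuad ε δ := by
    funext p
    unfold rQuad
    split_ifs with h
    · linear_combination (hsum p + hs p h) / 2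
    · linear_combination (hsum p + h2 p (not_le.1 h)) / 2
  have hb : β = rQuad (-ε) (-δ) := by
    funext p
    unfold rQuad
    split_ifs with h
    · push_cast
      linear_combination (hsum p - hs p h) / 2
    · push_cast
      linear_combination (hsum p - h2 p (not_le.1 h)) / 2
  rw [ha, hb]
  rcases hε with rfl | rfl <;> rcases hδ with rfl | rfl
  · left; rfl
  · right; rw [neg_neg, Set.pair_comm]
  · right; rw [neg_neg]
  · left; rw [neg_neg, Set.pair_comm]
end

section
/- For every natural number n ≥ 1 and every point M₀ ∈ ℂⁿ, there exist n functions z¹, …, zⁿ : ℂⁿ → ℂ, each continuous at the point M₀, such that for all M = (a₀, …, a_{n−1}) ∈ ℂⁿ and all z ∈ ℂ, zⁿ + a_{n−1}z^{n−1} + … + a₁z + a₀ = (z − z¹(M))·…·(z − zⁿ(M)). -/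
theorem aux_quot (n : ℕ) : ∃ Q : (Fin (n+1) → ℂ) × ℂ → (Fin n → ℂ), Continuous Q ∧
    ∀ M w z, (z ^ (n+1) + ∑ i : Fin (n+1), M i * z ^ (i : ℕ))
      - (w ^ (n+1) + ∑ i : Fin (n+1), M i * w ^ (i : ℕ))
      = (z - w) * (z ^ n + ∑ i : Fin n, Q (M, w) i * z ^ (i : ℕ)) := by
  induction n with
  | zero =>
    refine ⟨fun _ => Fin.elim0, continuous_const, ?_⟩
    intro M w z
    simp
  | succ n ih =>
    obtain ⟨Q, hQ, h⟩ := ih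
    refine ⟨fun x => Fin.cons (x.2 ^ (n+1) + ∑ i : Fin (n+1), x.1 i.succ * x.2 ^ (i : ℕ))
      (Q (fun i => x.1 i.succ, x.2)), ?_, ?_⟩
    · refine continuous_pi fun i => ?_
      refine Fin.cases ?_ (fun j => ?_) i
      · simp only [Fin.cons_zero]
        fun_prop
      · simp only [Fin.cons_succ]
        exact (continuous_apply j).comp (hQ.comp (by fun_prop))
    · intro M w z
      have key := h (fun i => M i.succ) w z
      have e : ∀ (m : ℕ) (N : Fin (m+1) → ℂ) (y : ℂ), ∑ i : Fin (m+1), N i * y ^ (i : ℕ)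
          = N 0 + y * ∑ i : Fin m, N i.succ * y ^ (i : ℕ) := by
        intro m N y
        rw [Fin.sum_univ_succ, Finset.mul_sum]
        simp only [Fin.val_zero, pow_zero, mul_one, Fin.val_succ]
        congr 1
        refine Finset.sum_congr rfl fun i _ => ?_
        ring
      rw [e (n+1) M z, e (n+1) M w, e n (Fin.cons _ _) z]
      simp only [Fin.cons_zero, Fin.cons_succ]
      linear_combination z * key

theorem aux_root (n : ℕ) (M : Fin (n+1) → ℂ) :
    ∃ w : ℂ, w ^ (n+1) + ∑ i : Fin (n+1), M i * w ^ (i : ℕ) = 0 := by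
  have hd : (Polynomial.X ^ (n+1) + ∑ i : Fin (n+1), Polynomial.C (M i) * Polynomial.X ^ (i : ℕ) :
      Polynomial ℂ).degree = ((n+1 : ℕ) : WithBot ℕ) := by
    rw [Polynomial.degree_add_eq_left_of_degree_lt]
    · simp
    · rw [Polynomial.degree_X_pow]
      exact Polynomial.degree_sum_fin_lt M
  obtain ⟨w, hw⟩ := IsAlgClosed.exists_root _ (by
    rw [hd]
    exact_mod_cast Nat.succ_ne_zero n)
  refine ⟨w, ?_⟩
  simpa [Polynomial.IsRoot, Polynomial.eval_finset_sum] using hw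

theorem aux_factor (n : ℕ) : ∀ M : Fin n → ℂ, ∃ r : Fin n → ℂ, ∀ z : ℂ,
    z ^ n + ∑ i : Fin n, M i * z ^ (i : ℕ) = ∏ i : Fin n, (z - r i) := by
  induction n with
  | zero => intro M; exact ⟨Fin.elim0, by simp⟩
  | succ n ih =>
    intro M
    obtain ⟨Q, -, h⟩ := aux_quot n
    obtain ⟨w, hw⟩ := aux_root n M
    obtain ⟨r, hr⟩ := ih (Q (M, w))
    refine ⟨Fin.cons w r, fun z => ?_⟩
    have := h M w z
    rw [hw, sub_zero, hr] at this
    rw [this, Fin.prod_univ_succ]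
    simp

theorem aux_near (n : ℕ) (M : Fin (n+1) → ℂ) (w0 : ℂ) :
    ∃ w : ℂ, w ^ (n+1) + ∑ i : Fin (n+1), M i * w ^ (i : ℕ) = 0 ∧
      ‖w0 - w‖ ^ (n+1) ≤ ‖w0 ^ (n+1) + ∑ i : Fin (n+1), M i * w0 ^ (i : ℕ)‖ := by
  obtain ⟨r, hr⟩ := aux_factor (n+1) M
  obtain ⟨j, -, hj⟩ := Finset.exists_min_image Finset.univ (fun i => ‖w0 - r i‖)
    Finset.univ_nonempty
  refine ⟨r j, ?_, ?_⟩
  · rw [hr]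
    exact Finset.prod_eq_zero (Finset.mem_univ j) (sub_self _)
  · rw [hr, norm_prod]
    calc ‖w0 - r j‖ ^ (n+1) = ∏ i : Fin (n+1), ‖w0 - r j‖ := by simp
      _ ≤ _ := Finset.prod_le_prod (fun _ _ => norm_nonneg _) (fun i hi => hj i hi)

theorem aux_main (n : ℕ) : ∀ (M₀ : Fin n → ℂ),
    ∃ r : Fin n → (Fin n → ℂ) → ℂ,
      (∀ i : Fin n, ContinuousAt (r i) M₀) ∧
      ∀ M : Fin n → ℂ, ∀ z : ℂ,
        z ^ n + ∑ i : Fin n, M i * z ^ (i : ℕ) = ∏ i : Fin n, (z - r i M) := by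
  induction n with
  | zero => intro M; exact ⟨Fin.elim0, fun i => i.elim0, by simp⟩
  | succ n ih =>
    intro M₀
    obtain ⟨Q, hQ, h⟩ := aux_quot n
    obtain ⟨w0, hw0⟩ := aux_root n M₀
    choose w hw hn using fun M => aux_near n M w0
    have hwM : w M₀ = w0 := by
      have := hn M₀
      rw [hw0, norm_zero] at this
      have h0 : ‖w0 - w M₀‖ = 0 :=
        pow_eq_zero_iff (Nat.succ_ne_zero n) |>.1 (le_antisymm this (by positivity))
      exact (sub_eq_zero.1 (norm_eq_zero.1 h0)).symm
    have hc : ContinuousAt w M₀ := by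
      have hF : Continuous fun M : Fin (n+1) → ℂ =>
          ‖w0 ^ (n+1) + ∑ i : Fin (n+1), M i * w0 ^ (i : ℕ)‖ := by fun_prop
      have hF0 := hF.tendsto M₀
      simp only [hw0, norm_zero] at hF0
      rw [Metric.continuousAt_iff']
      intro ε hε
      filter_upwards [hF0.eventually_lt_const (pow_pos hε (n+1))] with M hM
      rw [hwM, dist_comm, dist_eq_norm]
      exact lt_of_pow_lt_pow_left₀ (n+1) hε.le ((hn M).trans_lt hM)
    obtain ⟨r, hrc, hr⟩ := ih (Q (M₀, w M₀))
    have hQc : ContinuousAt (fun M => Q (M, w M)) M₀ :=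
      ContinuousAt.comp (f := fun M => (M, w M)) hQ.continuousAt (continuousAt_id.prodMk hc)
    refine ⟨Fin.cons w (fun i M => r i (Q (M, w M))), ?_, ?_⟩
    · intro i
      refine Fin.cases ?_ (fun j => ?_) i
      · simpa using hc
      · simp only [Fin.cons_succ]
        exact ContinuousAt.comp (f := fun M => Q (M, w M)) (hrc j) hQc
    · intro M z
      have := h M (w M) z
      rw [hw, sub_zero, hr] at this
      rw [this, Fin.prod_univ_succ]
      simp

/-- For every `n ≥ 1` and every point `M₀ ∈ ℂⁿ`, there exist `n` functions `ℂⁿ → ℂ`, each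
continuous at `M₀`, giving a full factorization of `zⁿ + a_{n−1}z^{n−1} + … + a₀` at every
coefficient tuple. -/
theorem exists_full_tuple_of_roots_continuousAt (n : ℕ) (hn : 1 ≤ n) (M₀ : Fin n → ℂ) :
    ∃ r : Fin n → (Fin n → ℂ) → ℂ,
      (∀ i : Fin n, ContinuousAt (r i) M₀) ∧
      ∀ M : Fin n → ℂ, ∀ z : ℂ,
        z ^ n + ∑ i : Fin n, M i * z ^ (i : ℕ) = ∏ i : Fin n, (z - r i M) := by
  exact aux_main n M₀
end

section
/- Let n ≥ 1 be a natural number, α < β real numbers, and a₀, …, a_{n−1} : [α, β] → ℂ continuous functions. Then there exist continuous functions x₁, …, xₙ : [α, β] → ℂ such that for every t ∈ [α, β] and every x ∈ ℂ, xⁿ + a_{n−1}(t)x^{n−1} + … + a₁(t)x + a₀(t) = (x − x₁(t))·…·(x − xₙ(t)). -/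
open Set Filter Topology

lemma chain_aux (ε : ℝ) (hε : 0 ≤ ε) : ∀ (N : ℕ) (S : Finset ℂ), S.card = N → ∀ (c : ℕ → ℂ) (j k : ℕ), j ≤ k →
    (∀ l, j ≤ l → l ≤ k → ∃ p ∈ S, dist (c l) p ≤ ε) →
    (∀ l, j ≤ l → l < k → dist (c l) (c (l+1)) ≤ ε) → dist (c j) (c k) ≤ 3 * N * ε := by
  intro N
  induction N with
  | zero =>
    intro S hS c j k hjk h1 _
    obtain ⟨p, hp, _⟩ := h1 j le_rfl hjk
    simp_all
  | succ N ih =>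
    intro S hS c j k hjk h1 h2
    obtain ⟨p, hp, hpj⟩ := h1 j le_rfl hjk
    classical
    -- last index close to p
    have hex : ∃ l, (j ≤ l ∧ l ≤ k ∧ dist (c l) p ≤ ε) ∧ ∀ m, l < m → m ≤ k → ¬ dist (c m) p ≤ ε := by
      let F := (Finset.Icc j k).filter (fun l => dist (c l) p ≤ ε)
      have hF : F.Nonempty := ⟨j, by simp [F, hjk, hpj]⟩
      have hm := F.max'_mem hF
      refine ⟨F.max' hF, ?_, ?_⟩
      · simp only [F, Finset.mem_filter, Finset.mem_Icc] at hm
        exact ⟨hm.1.1, hm.1.2, hm.2⟩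
      · intro m hlm hmk hd
        have hjl : j ≤ F.max' hF := by
          have := (Finset.mem_filter.1 hm).1
          exact (Finset.mem_Icc.1 this).1
        have : m ∈ F := by
          simp only [F, Finset.mem_filter, Finset.mem_Icc]
          exact ⟨⟨by omega, hmk⟩, hd⟩
        have := F.le_max' m this
        omega
    obtain ⟨l, ⟨hjl, hlk, hlp⟩, hl⟩ := hex
    have hjl2 : dist (c j) (c l) ≤ 2 * ε := by
      have := dist_triangle_right (c j) (c l) p
      linarith
    have hN : (0:ℝ) ≤ N := Nat.cast_nonneg N
    rcases hlk.eq_or_lt with rfl | hlt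
    · push_cast; nlinarith
    · have := ih (S.erase p) (by rw [Finset.card_erase_of_mem hp, hS]; rfl) c (l+1) k hlt
        (fun m hm hmk => by
          obtain ⟨q, hq, hqd⟩ := h1 m (by omega) hmk
          refine ⟨q, Finset.mem_erase.2 ⟨?_, hq⟩, hqd⟩
          rintro rfl
          exact hl m (by omega) hmk hqd)
        (fun m hm hmk => h2 m (by omega) hmk)
      have h3 := h2 l hjl hlt
      have h4 := dist_triangle4 (c j) (c l) (c (l+1)) (c k)
      push_cast
      linarith

lemma match_aux (n : ℕ) (α β : ℝ) (R : ℝ → Set (Fin n → ℂ))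
    (hK : IsCompact {p : ℝ × (Fin n → ℂ) | p.1 ∈ Icc α β ∧ p.2 ∈ R p.1})
    (huniq : ∀ t, ∀ x ∈ R t, ∀ y ∈ R t, ∃ σ : Equiv.Perm (Fin n), y ∘ σ = x)
    (ε : ℝ) (hε : 0 < ε) : ∃ δ > 0, ∀ t ∈ Icc α β, ∀ s ∈ Icc α β, dist t s < δ →
      ∀ x ∈ R t, ∀ y ∈ R s, ∃ σ : Equiv.Perm (Fin n), dist x (y ∘ σ) < ε := by
  set K := {p : ℝ × (Fin n → ℂ) | p.1 ∈ Icc α β ∧ p.2 ∈ R p.1} with hKd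
  let C : Set ((ℝ × (Fin n → ℂ)) × (ℝ × (Fin n → ℂ))) :=
    ⋂ σ : Equiv.Perm (Fin n), {q | ε ≤ dist q.1.2 (q.2.2 ∘ σ)}
  have hC : IsClosed C := by
    refine isClosed_iInter fun σ => isClosed_le continuous_const ?_
    refine Continuous.dist (by fun_prop) ?_
    refine continuous_pi fun i => ?_
    simp only [Function.comp]
    fun_prop
  have hD : IsCompact ((K ×ˢ K) ∩ C) := (hK.prod hK).inter_right hC
  rcases ((K ×ˢ K) ∩ C).eq_empty_or_nonempty with he | hne
  · refine ⟨1, one_pos, fun t ht s hs _ x hx y hy => ?_⟩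
    by_contra! hcon
    have : ((t, x), (s, y)) ∈ (K ×ˢ K) ∩ C := ⟨⟨⟨ht, hx⟩, ⟨hs, hy⟩⟩, by simpa [C] using hcon⟩
    rw [he] at this
    exact this
  · obtain ⟨q, hq, hmin⟩ := hD.exists_isMinOn hne (f := fun q => dist q.1.1 q.2.1) (by fun_prop)
    refine ⟨dist q.1.1 q.2.1, ?_, fun t ht s hs hts x hx y hy => ?_⟩
    · by_contra hcon
      have h0 : q.1.1 = q.2.1 := by
        rw [← dist_eq_zero]; exact le_antisymm (not_lt.1 hcon) dist_nonneg
      obtain ⟨⟨⟨_, h1⟩, ⟨_, h2⟩⟩, h3⟩ := hq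
      rw [← h0] at h2
      obtain ⟨σ, hσ⟩ := huniq _ _ h1 _ h2
      have := mem_iInter.1 h3 σ
      simp only [mem_ofPred_eq, hσ, dist_self] at this
      linarith
    · by_contra! hcon
      have : ((t, x), (s, y)) ∈ (K ×ˢ K) ∩ C := ⟨⟨⟨ht, hx⟩, ⟨hs, hy⟩⟩, by simpa [C] using hcon⟩
      have := hmin this
      simp only [mem_ofPred_eq] at this
      linarith

lemma core (n : ℕ) (α β : ℝ) (R : ℝ → Set (Fin n → ℂ))
    (hαβ : α ≤ β)
    (hK : IsCompact {p : ℝ × (Fin n → ℂ) | p.1 ∈ Icc α β ∧ p.2 ∈ R p.1})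
    (hne : ∀ t, (R t).Nonempty)
    (hperm : ∀ t, ∀ x ∈ R t, ∀ σ : Equiv.Perm (Fin n), x ∘ σ ∈ R t)
    (huniq : ∀ t, ∀ x ∈ R t, ∀ y ∈ R t, ∃ σ : Equiv.Perm (Fin n), y ∘ σ = x) :
    ∃ x : ℝ → Fin n → ℂ, ContinuousOn x (Icc α β) ∧ ∀ t ∈ Icc α β, x t ∈ R t := by
  have hmatch := match_aux n α β R hK huniq
  -- nearest points
  have hnear : ∀ s, ∀ x : Fin n → ℂ, ∃ y ∈ R s, ∀ y' ∈ R s, dist x y ≤ dist x y' := by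
    intro s x
    obtain ⟨y0, hy0⟩ := hne s
    obtain ⟨σ, hσ⟩ := Finite.exists_min (fun σ : Equiv.Perm (Fin n) => dist x (y0 ∘ σ))
    refine ⟨y0 ∘ σ, hperm s _ hy0 σ, fun y' hy' => ?_⟩
    obtain ⟨τ, rfl⟩ := huniq s y' hy' y0 hy0
    exact hσ τ
  choose next hnextR hnext using hnear
  -- discretisation
  let τ : ℕ → ℕ → ℝ := fun N j => min (α + j / (N + 1)) β
  have hτI : ∀ N j, τ N j ∈ Icc α β := fun N j =>
    ⟨le_min (by have : (0:ℝ) ≤ j / (N+1) := by positivity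
                linarith) hαβ, min_le_right _ _⟩
  have hτmono : ∀ N, Monotone (τ N) := by
    intro N j k hjk
    refine min_le_min ?_ le_rfl
    gcongr
  have hτstep : ∀ N j, dist (τ N j) (τ N (j+1)) ≤ 1 / (N + 1) := by
    intro N j
    have h1 : (0:ℝ) ≤ 1 / (N+1) := by positivity
    have h2 : α + ((j + 1 : ℕ) : ℝ) / (N + 1) = (α + j / (N + 1)) + 1 / (N+1) := by
      push_cast; ring
    have h3 := hτmono N (Nat.le_succ j)
    rw [dist_comm, Real.dist_eq, abs_of_nonneg (by simpa using h3)]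
    simp only [τ, h2]
    rcases min_cases (α + (j:ℝ) / (N + 1)) β with ⟨h, _⟩ | ⟨h, _⟩ <;>
      rcases min_cases (α + (j:ℝ) / (N + 1) + 1 / (N+1)) β with ⟨h', _⟩ | ⟨h', _⟩ <;>
      rw [h, h'] <;> linarith
  let X : ℕ → ℕ → Fin n → ℂ := fun N j =>
    Nat.rec (hne (τ N 0)).some (fun j x => next (τ N (j+1)) x) j
  have hXR : ∀ N j, X N j ∈ R (τ N j) := by
    intro N j
    cases j with
    | zero => exact (hne (τ N 0)).some_mem
    | succ j => exact hnextR _ _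
  have hXstep : ∀ N j, ∀ y ∈ R (τ N (j+1)), dist (X N j) (X N (j+1)) ≤ dist (X N j) y :=
    fun N j y hy => hnext (τ N (j+1)) (X N j) y hy
  let J : ℕ → ℝ → ℕ := fun N t => ⌊(t - α) * (N + 1)⌋₊
  have hτt : ∀ N, ∀ t ∈ Icc α β, dist (τ N (J N t)) t ≤ 1 / (N+1) := by
    intro N t ht
    have hp : (0:ℝ) < N + 1 := by positivity
    have h1 := Nat.floor_le (mul_nonneg (sub_nonneg.2 ht.1) hp.le)
    have h2 := Nat.lt_floor_add_one ((t - α) * (N + 1))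
    have h3 : (J N t : ℝ) / (N+1) ≤ t - α := by rw [div_le_iff₀ hp]; exact h1
    have h4 : t - α ≤ (J N t : ℝ) / (N+1) + 1 / (N+1) := by
      rw [← add_div, le_div_iff₀ hp]; exact h2.le
    have h5 : τ N (J N t) = α + J N t / (N+1) := min_eq_left (by linarith [ht.2])
    rw [h5, dist_comm, Real.dist_eq, abs_of_nonneg (by linarith)]
    linarith
  have hinv : Tendsto (fun N : ℕ => 1 / ((N:ℝ) + 1)) atTop (𝓝 0) :=
    tendsto_one_div_add_atTop_nhds_zero_nat
  let U : Ultrafilter ℕ := Ultrafilter.of atTop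
  have hU : (U : Filter ℕ) ≤ atTop := Ultrafilter.of_le atTop
  have hlim : ∀ t ∈ Icc α β, ∃ x ∈ R t, Tendsto (fun N => X N (J N t)) U (𝓝 x) := by
    intro t ht
    obtain ⟨p, hp, hpl⟩ := hK.ultrafilter_le_nhds (U.map (fun N => (τ N (J N t), X N (J N t))))
      (by
        rw [Ultrafilter.coe_map, le_principal_iff, mem_map]
        exact univ_mem' fun N => ⟨hτI _ _, hXR _ _⟩)
    have hpt : Tendsto (fun N => (τ N (J N t), X N (J N t))) U (𝓝 p) := hpl
    have h1 : Tendsto (fun N => τ N (J N t)) U (𝓝 p.1) := (continuous_fst.tendsto p).comp hpt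
    have h2 : Tendsto (fun N => X N (J N t)) U (𝓝 p.2) := (continuous_snd.tendsto p).comp hpt
    have h3 : Tendsto (fun N => τ N (J N t)) U (𝓝 t) := by
      rw [tendsto_iff_dist_tendsto_zero]
      exact squeeze_zero (fun _ => dist_nonneg) (fun N => hτt N t ht) (hinv.mono_left hU)
    have h4 := tendsto_nhds_unique h1 h3
    exact ⟨p.2, h4 ▸ hp.2, h2⟩
  have hlim' : ∀ t, ∃ x, t ∈ Icc α β → x ∈ R t ∧ Tendsto (fun N => X N (J N t)) U (𝓝 x) := by
    intro t
    by_cases ht : t ∈ Icc α β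
    · obtain ⟨x, h1, h2⟩ := hlim t ht
      exact ⟨x, fun _ => ⟨h1, h2⟩⟩
    · exact ⟨0, fun h => absurd h ht⟩
  choose x hx using hlim'
  refine ⟨x, ?_, fun t ht => (hx t ht).1⟩
  -- equicontinuity
  have hequi : ∀ ε > 0, ∃ δ > 0, ∀ N : ℕ, 1 / ((N:ℝ)+1) < δ → ∀ j k, j ≤ k → dist (τ N j) (τ N k) < δ →
      dist (X N j) (X N k) ≤ 3 * n * ε := by
    intro ε hε
    obtain ⟨δ, hδ, h⟩ := hmatch ε hε
    refine ⟨δ, hδ, fun N hN j k hjk hd => ?_⟩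
    rw [dist_pi_le_iff (by positivity)]
    intro i
    classical
    let S : Finset ℂ := Finset.univ.image (X N j)
    have hSc : (S.card : ℝ) ≤ n := by
      exact_mod_cast (Finset.card_image_le.trans (by simp))
    refine (chain_aux ε hε.le S.card S rfl (fun l => X N l i) j k hjk ?_ ?_).trans (by gcongr)
    · intro l hjl hlk
      have hd' : dist (τ N l) (τ N j) < δ := by
        refine lt_of_le_of_lt ?_ hd
        have a1 := hτmono N hjl
        have a2 := hτmono N hlk
        rw [Real.dist_eq, dist_comm, Real.dist_eq, abs_of_nonneg (by linarith),
          abs_of_nonneg (by linarith)]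
        linarith
      obtain ⟨σ, hσ⟩ := h _ (hτI N l) _ (hτI N j) hd' _ (hXR N l) _ (hXR N j)
      exact ⟨X N j (σ i), by simp [S], (dist_le_pi_dist _ _ i).trans hσ.le⟩
    · intro l hjl hlk
      obtain ⟨σ, hσ⟩ := h _ (hτI N l) _ (hτI N (l+1)) ((hτstep N l).trans_lt hN) _ (hXR N l) _ (hXR N (l+1))
      exact (dist_le_pi_dist _ _ i).trans ((hXstep N l _ (hperm _ _ (hXR N (l+1)) σ)).trans hσ.le)
  rw [Metric.continuousOn_iff]
  intro t ht ε hε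
  obtain ⟨δ, hδ, h⟩ := hequi (ε / (3 * n + 1)) (by positivity)
  refine ⟨δ / 3, by positivity, fun s hs hst => ?_⟩
  have hev : ∀ᶠ N : ℕ in U, dist (X N (J N s)) (X N (J N t)) ≤ 3 * n * (ε / (3 * n + 1)) := by
    have h0 : ∀ᶠ N : ℕ in U, 1 / ((N:ℝ)+1) < δ / 3 :=
      hU (hinv.eventually_lt_const (by positivity))
    filter_upwards [h0] with N hN
    have hd : dist (τ N (J N s)) (τ N (J N t)) < δ := by
      have a1 := hτt N s hs
      have a2 := hτt N t ht
      have a3 := dist_triangle4 (τ N (J N s)) s t (τ N (J N t))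
      rw [dist_comm t] at a3
      linarith
    rcases le_total (J N s) (J N t) with hle | hle
    · exact h N (by linarith) _ _ hle hd
    · rw [dist_comm] at hd ⊢
      exact h N (by linarith) _ _ hle hd
  have hfin := le_of_tendsto ((hx s hs).2.dist (hx t ht).2) hev
  refine hfin.trans_lt ?_
  rw [← mul_div_assoc, div_lt_iff₀ (by positivity)]
  nlinarith

lemma root_bound (n : ℕ) (a : Fin n → ℂ) (z : ℂ) (M : ℝ) (hM : ∀ i, ‖a i‖ ≤ M)
    (h : z ^ n + ∑ i : Fin n, a i * z ^ (i : ℕ) = 0) : ‖z‖ ≤ 1 + n * M := by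
  by_contra! hcon
  rcases Nat.eq_zero_or_pos n with rfl | hn
  · simp at h
  have hM0 : 0 ≤ M := (norm_nonneg _).trans (hM ⟨0, hn⟩)
  have h1 : 1 ≤ ‖z‖ := by
    have : 0 ≤ n * M := by positivity
    linarith
  have h2 : ‖z‖ ^ n ≤ n * M * ‖z‖ ^ (n-1) := by
    rw [← norm_pow, eq_neg_of_add_eq_zero_left h, norm_neg]
    refine (norm_sum_le _ _).trans ?_
    have : ∀ i ∈ (Finset.univ : Finset (Fin n)), ‖a i * z ^ (i:ℕ)‖ ≤ M * ‖z‖ ^ (n-1) := by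
      intro i _
      rw [norm_mul, norm_pow]
      have hi : (i:ℕ) ≤ n - 1 := by omega
      gcongr
      · exact hM i
    refine (Finset.sum_le_sum this).trans ?_
    simp [mul_assoc]
  have h3 : ‖z‖ ^ n = ‖z‖ * ‖z‖ ^ (n-1) := by
    rw [← pow_succ', Nat.sub_add_cancel hn]
  rw [h3] at h2
  have := le_of_mul_le_mul_right h2 (by positivity)
  linarith

lemma exists_fac (n : ℕ) (a : Fin n → ℂ) : ∃ x : Fin n → ℂ, ∀ z : ℂ,
    z ^ n + ∑ i : Fin n, a i * z ^ (i : ℕ) = ∏ i : Fin n, (z - x i) := by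
  open Polynomial in
  let q : ℂ[X] := ∑ i : Fin n, C (a i) * X ^ (i:ℕ)
  have hq : q.degree < n := by
    refine (Polynomial.degree_sum_fin_lt a)
  have hmon : (Polynomial.X ^ n + q).Monic := Polynomial.monic_X_pow_add hq
  have hdeg : (Polynomial.X ^ n + q).natDegree = n := Polynomial.natDegree_eq_of_degree_eq_some
    (by rw [Polynomial.degree_add_eq_left_of_degree_lt] <;> simp [hq])
  set p := Polynomial.X ^ n + q with hp
  have hs := IsAlgClosed.splits p
  have hc : p.roots.card = n := by rw [← hs.natDegree_eq_card_roots, hdeg]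
  have hl : p.roots.toList.length = n := by simp [hc]
  refine ⟨fun i => p.roots.toList.get (i.cast hl.symm), fun z => ?_⟩
  have h1 : p.eval z = z ^ n + ∑ i : Fin n, a i * z ^ (i : ℕ) := by
    simp [hp, q, Polynomial.eval_finsetSum]
  have h2 : p.eval z = (p.roots.map (fun x => z - x)).prod := by
    conv_lhs => rw [hs.eq_prod_roots_of_monic hmon]
    rw [Polynomial.eval_multiset_prod, Multiset.map_map]
    simp
  rw [← h1, h2]
  conv_lhs => rw [← Multiset.coe_toList p.roots]
  rw [Multiset.map_coe, Multiset.prod_coe, ← List.prod_ofFn]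
  congr 1
  apply List.ext_get <;> simp [hc]

lemma fac_uniq (n : ℕ) (x y : Fin n → ℂ) (h : ∀ z, ∏ i, (z - x i) = ∏ i, (z - y i)) :
    ∃ σ : Equiv.Perm (Fin n), y ∘ σ = x := by
  have hp : ∏ i, (Polynomial.X - Polynomial.C (x i)) = ∏ i, (Polynomial.X - Polynomial.C (y i)) := by
    apply Polynomial.funext
    intro z
    simpa [Polynomial.eval_prod] using h z
  have key : ∀ w : Fin n → ℂ, (∏ i, (Polynomial.X - Polynomial.C (w i))).roots =
      Multiset.map w Finset.univ.val := by
    intro w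
    rw [← Polynomial.roots_multiset_prod_X_sub_C (Multiset.map w Finset.univ.val), Multiset.map_map]
    rfl
  have h2 := congrArg Polynomial.roots hp
  rw [key, key] at h2
  classical
  have h3 : ∀ c : ℂ, Nonempty ({i // x i = c} ≃ {i // y i = c}) := by
    intro c
    have h4 := congrArg (Multiset.count c) h2
    rw [Multiset.count_map, Multiset.count_map] at h4
    refine ⟨Fintype.equivOfCardEq ?_⟩
    rw [Fintype.card_subtype, Fintype.card_subtype]
    simpa only [Finset.card_def, Finset.filter_val, eq_comm] using h4
  let e := fun c => (h3 c).some
  refine ⟨(Equiv.sigmaFiberEquiv x).symm.trans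
    ((Equiv.sigmaCongrRight e).trans (Equiv.sigmaFiberEquiv y)), ?_⟩
  funext i
  exact (e (x i) ⟨i, rfl⟩).2

theorem exists_continuous_full_tuple_of_roots_on_interval (n : ℕ) (hn : 1 ≤ n)
    (α β : ℝ) (hαβ : α < β) (a : Fin n → ℝ → ℂ)
    (ha : ∀ i : Fin n, ContinuousOn (a i) (Set.Icc α β)) :
    ∃ x : Fin n → ℝ → ℂ,
      (∀ i : Fin n, ContinuousOn (x i) (Set.Icc α β)) ∧
      ∀ t ∈ Set.Icc α β, ∀ z : ℂ,
        z ^ n + ∑ i : Fin n, a i t * z ^ (i : ℕ) = ∏ i : Fin n, (z - x i t) := by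
  let b : Fin n → ℝ → ℂ := fun i => IccExtend hαβ.le ((Icc α β).domRestrict (a i))
  have hb : ∀ i, Continuous (b i) := fun i => (continuousOn_iff_continuous_domRestrict.1 (ha i)).Icc_extend'
  have hba : ∀ i, ∀ t ∈ Icc α β, b i t = a i t := fun i t ht => by
    simp only [b]
    rw [IccExtend_of_mem _ _ ht]
    rfl
  let R : ℝ → Set (Fin n → ℂ) := fun t =>
    {x | ∀ z : ℂ, z ^ n + ∑ i : Fin n, b i t * z ^ (i : ℕ) = ∏ i : Fin n, (z - x i)}
  have hM : ∃ M, ∀ t ∈ Icc α β, ∀ i, ‖b i t‖ ≤ M := by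
    obtain ⟨M, hM⟩ := isCompact_Icc.exists_bound_of_continuousOn (s := Icc α β)
      (f := fun t i => b i t) (continuous_pi hb).continuousOn
    exact ⟨M, fun t ht i => (norm_le_pi_norm (fun i => b i t) i).trans (hM t ht)⟩
  obtain ⟨M, hM⟩ := hM
  have hK : IsCompact {p : ℝ × (Fin n → ℂ) | p.1 ∈ Icc α β ∧ p.2 ∈ R p.1} := by
    refine (isCompact_Icc.prod (isCompact_univ_pi (fun _ : Fin n =>
      isCompact_closedBall (0:ℂ) (1 + n * M)))).of_isClosed_subset (s := Icc α β ×ˢ _) ?_ ?_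
    · refine (isClosed_Icc.preimage continuous_fst).inter ?_
      have hE : {p : ℝ × (Fin n → ℂ) | p.2 ∈ R p.1} = ⋂ z : ℂ, {p : ℝ × (Fin n → ℂ) |
          z ^ n + ∑ i : Fin n, b i p.1 * z ^ (i : ℕ) = ∏ i : Fin n, (z - p.2 i)} := by
        ext p
        rw [mem_iInter]
        rfl
      change IsClosed {p : ℝ × (Fin n → ℂ) | p.2 ∈ R p.1}
      rw [hE]
      refine isClosed_iInter fun z => isClosed_eq ?_ ?_
      · have := fun i => (hb i).comp (continuous_fst (X := ℝ) (Y := Fin n → ℂ))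
        refine continuous_const.add (continuous_finset_sum _ fun i _ => (this i).mul continuous_const)
      · fun_prop
    · rintro ⟨t, x⟩ ⟨ht, hx⟩
      refine ⟨ht, fun i _ => ?_⟩
      rw [mem_closedBall_zero_iff]
      refine root_bound n (fun i => b i t) (x i) M (hM t ht) ?_
      rw [hx (x i)]
      exact Finset.prod_eq_zero (Finset.mem_univ i) (sub_self _)
  obtain ⟨x, hxc, hxR⟩ := core n α β R hαβ.le hK (fun t => exists_fac n _)
    (fun t x hx σ z => by
      rw [hx z]
      exact (Equiv.prod_comp σ (fun i => z - x i)).symm)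
    (fun t x hx y hy => fac_uniq n x y fun z => (hx z).symm.trans (hy z))
  refine ⟨fun i t => x t i, fun i => (continuous_apply i).comp_continuousOn hxc, fun t ht z => ?_⟩
  rw [← hxR t ht z]
  simp only [hba _ t ht]
end

section
/- Let n ≥ 1 be a natural number and D_a, D_w be compact subsets of ℂⁿ. For M = (a₀, …, a_{n−1}) ∈ ℂⁿ, let Λ̄(M) denote the maximum of the real parts of the roots of the characteristic polynomial λⁿ − a_{n−1}λ^{n−1} − … − a₁λ − a₀. Then there exists a constant C ≥ 0 such that for every M = (a₀, …, a_{n−1}) ∈ D_a, every N = (w⁰, …, w^{n−1}) ∈ D_w, every n-times differentiable function w : ℝ → ℂ satisfying w⁽ⁿ⁾(ξ) = a_{n−1}·w⁽ⁿ⁻¹⁾(ξ) + … + a₁·w′(ξ) + a₀·w(ξ) for all ξ ≥ 0 and w⁽ⁱ⁾(0) = wⁱ for i = 0, …, n−1, every index i ∈ {0, …, n−1}, and every ξ ≥ 0, one has |w⁽ⁱ⁾(ξ)| ≤ C·(1 + ξ^{n−1})·e^{Λ̄(M)·ξ}. -/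
open Polynomial Finset in
/-- The differential operator with symbol `p` (truncated at order `n`) applied to `w` at `x`. -/
noncomputable def polyOp (n : ℕ) (w : ℝ → ℂ) (p : ℂ[X]) (x : ℝ) : ℂ :=
  ∑ i ∈ range (n + 1), p.coeff i * iteratedDeriv i w x

open Polynomial Finset

theorem polyOp_add (n : ℕ) (w : ℝ → ℂ) (p q : ℂ[X]) (x : ℝ) :
    polyOp n w (p + q) x = polyOp n w p x + polyOp n w q x := by
  simp [polyOp, add_mul, sum_add_distrib]

theorem polyOp_C_mul (n : ℕ) (w : ℝ → ℂ) (c : ℂ) (q : ℂ[X]) (x : ℝ) :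
    polyOp n w (C c * q) x = c * polyOp n w q x := by
  simp [polyOp, mul_sum, mul_assoc]

theorem polyOp_X_pow (n : ℕ) (w : ℝ → ℂ) (i : ℕ) (hi : i ≤ n) (x : ℝ) :
    polyOp n w (X ^ i) x = iteratedDeriv i w x := by
  simp only [polyOp, coeff_X_pow, ite_mul, one_mul, zero_mul]
  rw [Finset.sum_ite_eq' (range (n + 1)) i]
  simp; omega

theorem polyOp_hasDerivAt (n : ℕ) (w : ℝ → ℂ)
    (hw : ∀ i < n, Differentiable ℝ (iteratedDeriv i w)) (p : ℂ[X]) (hp : p.natDegree < n)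
    (x : ℝ) : HasDerivAt (polyOp n w p) (polyOp n w (X * p) x) x := by
  have h1 : polyOp n w p = fun y => ∑ i ∈ range n, p.coeff i * iteratedDeriv i w y := by
    funext y
    simp [polyOp, sum_range_succ, coeff_eq_zero_of_natDegree_lt hp]
  have h2 : polyOp n w (X * p) x = ∑ i ∈ range n, p.coeff i * iteratedDeriv (i + 1) w x := by
    simp [polyOp, sum_range_succ', coeff_X_mul]
  rw [h1, h2]
  apply HasDerivAt.fun_sum
  intro i hi
  apply HasDerivAt.const_mul
  rw [iteratedDeriv_succ]
  exact (hw i (mem_range.1 hi) x).hasDerivAt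

/-- One step: variation of constants estimate. -/
theorem step_bound (u v : ℝ → ℂ) (l : ℂ) (Λ K : ℝ) (hK : 0 ≤ K) (j : ℕ) (hl : l.re ≤ Λ)
    (hu : ∀ x, 0 ≤ x → HasDerivAt u (l * u x + v x) x) (h0 : ‖u 0‖ ≤ K)
    (hv : ∀ x, 0 ≤ x → ‖v x‖ ≤ K * (∑ i ∈ range j, x ^ i) * Real.exp (Λ * x)) :
    ∀ x, 0 ≤ x → ‖u x‖ ≤ K * (∑ i ∈ range (j + 1), x ^ i) * Real.exp (Λ * x) := by
  intro x hx
  have hg : ∀ y : ℝ, 0 ≤ y →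
      HasDerivAt (fun y : ℝ => Complex.exp (-l * y) * u y) (Complex.exp (-l * y) * v y) y := by
    intro y hy
    have e : HasDerivAt (fun y : ℝ => Complex.exp (-l * y)) (Complex.exp (-l * y) * (-l)) y := by
      have : HasDerivAt (fun y : ℝ => -l * (y : ℂ)) (-l) y := by
        simpa using (Complex.ofRealCLM.hasDerivAt (x := y)).const_mul (-l)
      exact this.cexp
    refine (e.fun_mul (hu y hy)).congr_deriv ?_
    ring
  have hn : ∀ y : ℝ, ‖Complex.exp (-l * y)‖ = Real.exp (-l.re * y) := by
    intro y; rw [Complex.norm_exp]; simp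
  set B : ℝ → ℝ := fun y => K * (∑ i ∈ range (j + 1), y ^ i) * Real.exp ((Λ - l.re) * y) with hB
  set B' : ℝ → ℝ := fun y => K * (∑ i ∈ range (j + 1), (i : ℝ) * y ^ (i - 1)) *
      Real.exp ((Λ - l.re) * y) +
      K * (∑ i ∈ range (j + 1), y ^ i) * (Real.exp ((Λ - l.re) * y) * (Λ - l.re)) with hB'
  have hBd : ∀ y, HasDerivAt B (B' y) y := by
    intro y
    have s : HasDerivAt (fun y : ℝ => ∑ i ∈ range (j + 1), y ^ i)
        (∑ i ∈ range (j + 1), (i : ℝ) * y ^ (i - 1)) y :=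
      HasDerivAt.fun_sum fun i _ => hasDerivAt_pow i y
    have e : HasDerivAt (fun y : ℝ => Real.exp ((Λ - l.re) * y))
        (Real.exp ((Λ - l.re) * y) * (Λ - l.re)) y := by
      have : HasDerivAt (fun y : ℝ => (Λ - l.re) * y) (Λ - l.re) y := by
        simpa using (hasDerivAt_id y).const_mul (Λ - l.re)
      exact this.exp
    exact (s.const_mul K).mul e
  have key : ‖Complex.exp (-l * x) * u x‖ ≤ B x := by
    refine image_norm_le_of_norm_deriv_right_le_deriv_boundary
      (f := fun y : ℝ => Complex.exp (-l * y) * u y)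
      (f' := fun y : ℝ => Complex.exp (-l * y) * v y) (a := 0) (b := x) (B := B) (B' := B')
      ?_ ?_ ?_ hBd ?_ ⟨hx, le_rfl⟩
    · intro y hy
      exact (hg y hy.1).continuousAt.continuousWithinAt
    · intro y hy
      exact (hg y hy.1).hasDerivWithinAt
    · simp only [hB, sum_range_succ']
      simpa using h0
    · intro y hy
      have hy0 : 0 ≤ y := hy.1
      rw [norm_mul, hn]
      have h1 : Real.exp (-l.re * y) * ‖v y‖ ≤
          K * (∑ i ∈ range j, y ^ i) * Real.exp ((Λ - l.re) * y) := by
        calc _ ≤ Real.exp (-l.re * y) * (K * (∑ i ∈ range j, y ^ i) * Real.exp (Λ * y)) := by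
              gcongr; exact hv y hy0
          _ = K * (∑ i ∈ range j, y ^ i) * (Real.exp (-l.re * y) * Real.exp (Λ * y)) := by ring
          _ = _ := by rw [← Real.exp_add]; ring_nf
      have h2 : ∑ i ∈ range j, y ^ i ≤ ∑ i ∈ range (j + 1), (i : ℝ) * y ^ (i - 1) := by
        rw [sum_range_succ']
        simp only [Nat.cast_zero, zero_mul, add_zero, Nat.add_sub_cancel]
        refine sum_le_sum fun i _ => ?_
        have : 0 ≤ y ^ i := pow_nonneg hy0 i
        push_cast
        nlinarith [(Nat.cast_nonneg i : (0:ℝ) ≤ i)]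
      have h3 : 0 ≤ K * (∑ i ∈ range (j + 1), y ^ i) * (Real.exp ((Λ - l.re) * y) * (Λ - l.re)) := by
        have : 0 ≤ Λ - l.re := by linarith
        have : 0 ≤ ∑ i ∈ range (j + 1), y ^ i := sum_nonneg fun i _ => pow_nonneg hy0 i
        positivity
      refine h1.trans ?_
      have h4 : K * (∑ i ∈ range j, y ^ i) * Real.exp ((Λ - l.re) * y) ≤
        K * (∑ i ∈ range (j + 1), (i : ℝ) * y ^ (i - 1)) * Real.exp ((Λ - l.re) * y) := by
        gcongr
      simp only [hB']
      linarith
  rw [norm_mul, hn] at key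
  have : ‖u x‖ = Real.exp (l.re * x) * (Real.exp (-l.re * x) * ‖u x‖) := by
    rw [← mul_assoc, ← Real.exp_add]; simp
  rw [this]
  calc _ ≤ Real.exp (l.re * x) * B x := by gcongr
    _ = K * (∑ i ∈ range (j + 1), x ^ i) * (Real.exp (l.re * x) * Real.exp ((Λ - l.re) * x)) := by
        simp only [hB]; ring
    _ = _ := by rw [← Real.exp_add]; ring_nf

theorem chain_bound (n : ℕ) (u : ℕ → ℝ → ℂ) (l : ℕ → ℂ) (Λ K : ℝ) (hK : 0 ≤ K)
    (hl : ∀ k < n, (l k).re ≤ Λ)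
    (hu : ∀ k < n, ∀ x, 0 ≤ x → HasDerivAt (u k) (l k * u k x + u (k + 1) x) x)
    (h0 : ∀ k < n, ‖u k 0‖ ≤ K) (hn : ∀ x, 0 ≤ x → u n x = 0) (j : ℕ) :
    ∀ k, k + j = n → ∀ x, 0 ≤ x →
      ‖u k x‖ ≤ K * (∑ i ∈ range j, x ^ i) * Real.exp (Λ * x) := by
  induction j with
  | zero => intro k hk x hx; obtain rfl : k = n := by omega
            simp [hn x hx]
  | succ j ih =>
    intro k hk
    exact step_bound (u k) (u (k + 1)) (l k) Λ K hK j (hl k (by omega)) (hu k (by omega))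
      (h0 k (by omega)) (ih (k + 1) (by omega))

theorem exists_roots (n : ℕ) (a : Fin n → ℂ) :
    ∃ l : ℕ → ℂ, ∏ k ∈ range n, (X - C (l k)) = X ^ n - ∑ i : Fin n, C (a i) * X ^ (i : ℕ) := by
  set P : ℂ[X] := X ^ n - ∑ i : Fin n, C (a i) * X ^ (i : ℕ) with hP
  have hd : (∑ i : Fin n, C (a i) * X ^ (i : ℕ) : ℂ[X]).degree < (n : WithBot ℕ) := by
    rw [← mem_degreeLT]
    refine Submodule.sum_mem _ fun i _ => ?_
    rw [mem_degreeLT]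
    refine (degree_C_mul_X_pow_le _ _).trans_lt ?_
    exact_mod_cast i.2
  have hm : P.Monic := monic_X_pow_sub hd
  have hdeg : P.natDegree = n := by
    have : P.degree = n := by
      rw [hP, degree_sub_eq_left_of_degree_lt] <;> simp [hd]
    exact natDegree_eq_of_degree_eq_some this
  have hs : P.Splits := IsAlgClosed.splits P
  have hprod := hs.eq_prod_roots_of_monic hm
  have hcard : P.roots.card = n := by rw [← hs.natDegree_eq_card_roots, hdeg]
  refine ⟨fun k => P.roots.toList.getD k 0, ?_⟩
  have hlen : P.roots.toList.length = n := by simpa using hcard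
  conv_rhs => rw [hprod]
  rw [← Multiset.coe_toList P.roots, Multiset.map_coe, Multiset.prod_coe]
  simp only [Multiset.coe_toList]
  rw [← Fin.prod_univ_eq_prod_range (fun k => X - C (P.roots.toList.getD k 0)) n]
  generalize P.roots.toList = L at hlen
  subst hlen
  rw [← Fin.prod_univ_fun_getElem]
  refine Finset.prod_congr rfl fun i _ => ?_
  simp

theorem root_bound_s12 (n : ℕ) (a : Fin n → ℂ) (A : ℝ) (hA : ∀ i, ‖a i‖ ≤ A) (l : ℂ)
    (hA0 : 0 ≤ A) (hl : l ^ n - ∑ i : Fin n, a i * l ^ (i : ℕ) = 0) : ‖l‖ ≤ 1 + n * A := by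
  by_contra! hlt
  have h1 : 1 < ‖l‖ := by
    have : 0 ≤ n * A := by positivity
    linarith
  have hn : n ≠ 0 := by
    rintro rfl
    simp at hl
  obtain ⟨m, rfl⟩ := Nat.exists_eq_succ_of_ne_zero hn
  have h2 : ‖l‖ ^ (m + 1) ≤ ((m + 1 : ℕ) : ℝ) * A * ‖l‖ ^ m := by
    rw [← norm_pow, sub_eq_zero.1 hl]
    calc _ ≤ ∑ i : Fin (m + 1), ‖a i * l ^ (i : ℕ)‖ := norm_sum_le _ _
      _ ≤ ∑ i : Fin (m + 1), A * ‖l‖ ^ m := by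
          refine sum_le_sum fun i _ => ?_
          rw [norm_mul, norm_pow]
          have : ‖l‖ ^ (i : ℕ) ≤ ‖l‖ ^ m := pow_le_pow_right₀ h1.le (by omega)
          gcongr
          exact hA i
      _ = _ := by simp [mul_assoc]
  rw [pow_succ'] at h2
  have := le_of_mul_le_mul_right h2 (by positivity)
  simp only [Nat.succ_eq_add_one] at hlt
  linarith


/-- `maxCharRootRe n a` is the maximum `Λ̄(M)` of the real parts of the roots of the
characteristic polynomial `λⁿ − a_{n−1}λ^{n−1} − … − a₁λ − a₀` (realized as the supremum of
the nonempty finite set of real parts of the roots). -/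
noncomputable def maxCharRootRe (n : ℕ) (a : Fin n → ℂ) : ℝ :=
  sSup {x : ℝ | ∃ l : ℂ, l ^ n - ∑ i : Fin n, a i * l ^ (i : ℕ) = 0 ∧ x = l.re}

/-- Uniform exponential–power estimate for solutions of the linear ODE
`w⁽ⁿ⁾ = a_{n−1}w⁽ⁿ⁻¹⁾ + … + a₀w` with coefficients in a compact set `D_a` and initial data in
a compact set `D_w`: there is `C ≥ 0` with
`|w⁽ⁱ⁾(ξ)| ≤ C·(1 + ξ^{n−1})·exp(Λ̄(M)·ξ)` for all `i < n` and all `ξ ≥ 0`. -/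
theorem uniform_estimate_linear_ode (n : ℕ) (hn : 1 ≤ n)
    (Da Dw : Set (Fin n → ℂ)) (hDa : IsCompact Da) (hDw : IsCompact Dw) :
    ∃ C : ℝ, 0 ≤ C ∧
      ∀ M ∈ Da, ∀ N ∈ Dw, ∀ w : ℝ → ℂ,
        (∀ i < n, Differentiable ℝ (iteratedDeriv i w)) →
        (∀ ξ : ℝ, 0 ≤ ξ →
          iteratedDeriv n w ξ = ∑ i : Fin n, M i * iteratedDeriv (i : ℕ) w ξ) →
        (∀ i : Fin n, iteratedDeriv (i : ℕ) w 0 = N i) →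
        ∀ i < n, ∀ ξ : ℝ, 0 ≤ ξ →
          ‖iteratedDeriv i w ξ‖ ≤
            C * (1 + ξ ^ (n - 1)) * Real.exp (maxCharRootRe n M * ξ) := by
  obtain ⟨A, hA⟩ := hDa.isBounded.exists_norm_le
  obtain ⟨W, hW⟩ := hDw.isBounded.exists_norm_le
  set A' : ℝ := max A 0 with hA'
  set W' : ℝ := max W 0 with hW'
  have hA0 : 0 ≤ A' := le_max_right _ _
  have hW0 : 0 ≤ W' := le_max_right _ _
  set R : ℝ := 1 + n * A' with hR
  have hR0 : 0 ≤ R := by positivity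
  set K : ℝ := (1 + R) ^ n * W' with hK
  have hK0 : 0 ≤ K := by positivity
  refine ⟨(1 + R) ^ n * (K * n), by positivity, ?_⟩
  intro M hM N hN w hw hode hinit i hi x hx
  have hMA : ∀ i, ‖M i‖ ≤ A' := fun i =>
    (norm_le_pi_norm M i).trans ((hA M hM).trans (le_max_left _ _))
  have hNW : ∀ i, ‖N i‖ ≤ W' := fun i =>
    (norm_le_pi_norm N i).trans ((hW N hN).trans (le_max_left _ _))
  obtain ⟨l, hl⟩ := exists_roots n M
  have hroot : ∀ k < n, l k ^ n - ∑ i : Fin n, M i * l k ^ (i : ℕ) = 0 := by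
    intro k hk
    have h := congrArg (eval (l k)) hl
    rw [eval_prod, prod_eq_zero (mem_range.2 hk) (by simp)] at h
    simpa [eval_finsetSum] using h.symm
  have hlR : ∀ k < n, ‖l k‖ ≤ R := fun k hk => root_bound_s12 n M A' hMA (l k) hA0 (hroot k hk)
  have hre : ∀ k < n, (l k).re ≤ maxCharRootRe n M := by
    intro k hk
    refine le_csSup ⟨R, ?_⟩ ⟨l k, hroot k hk, rfl⟩
    rintro y ⟨z, hz, rfl⟩
    exact (Complex.re_le_norm z).trans (root_bound_s12 n M A' hMA z hA0 hz)
  set Q : ℕ → ℂ[X] := fun k => ∏ j ∈ range k, (X - C (l j)) with hQ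
  have hQs : ∀ k, X * Q k = C (l k) * Q k + Q (k + 1) := by
    intro k
    simp only [hQ, prod_range_succ]
    ring
  have hQs' : ∀ m k, X ^ (m + 1) * Q k = C (l k) * (X ^ m * Q k) + X ^ m * Q (k + 1) := by
    intro m k
    rw [pow_succ, mul_assoc, hQs]; ring
  have hQd : ∀ k, (Q k).natDegree = k := by
    intro k
    simp only [hQ]
    rw [natDegree_prod_of_monic _ _ (fun j _ => monic_X_sub_C _)]
    simp
  -- initial data
  have hini : ∀ k m, m + k < n → ‖polyOp n w (X ^ m * Q k) 0‖ ≤ (1 + R) ^ k * W' := by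
    intro k
    induction k with
    | zero =>
      intro m hm
      simp only [hQ, range_zero, prod_empty, mul_one, pow_zero, one_mul]
      rw [polyOp_X_pow n w m (by omega)]
      have := hinit ⟨m, by omega⟩
      simp only at this
      rw [this]
      exact hNW _
    | succ k ih =>
      intro m hm
      have h := congrArg (fun p => polyOp n w p 0) (hQs' m k)
      simp only [polyOp_add, polyOp_C_mul] at h
      rw [← sub_eq_iff_eq_add'.2 h]
      refine (norm_sub_le _ _).trans ?_
      rw [norm_mul]
      have h1 := ih (m + 1) (by omega)
      have h2 := ih m (by omega)
      have h3 := mul_le_mul (hlR k (by omega)) h2 (norm_nonneg _) hR0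
      calc _ ≤ (1 + R) ^ k * W' + R * ((1 + R) ^ k * W') := add_le_add h1 h3
        _ = _ := by ring
  have hB0 : 0 ≤ K * n * (1 + x ^ (n - 1)) * Real.exp (maxCharRootRe n M * x) := by positivity
  have hu : ∀ k ≤ n, ‖polyOp n w (Q k) x‖ ≤
      K * n * (1 + x ^ (n - 1)) * Real.exp (maxCharRootRe n M * x) := by
    intro k hk
    have hc := chain_bound n (fun k => polyOp n w (Q k)) l (maxCharRootRe n M) K hK0 hre
      (by
        intro k hk x _
        have := polyOp_hasDerivAt n w hw (Q k) (by rw [hQd]; exact hk) x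
        rwa [hQs, polyOp_add, polyOp_C_mul] at this)
      (by
        intro k hk
        have := hini k 0 (by omega)
        rw [pow_zero, one_mul] at this
        refine this.trans ?_
        have : (1 + R) ^ k ≤ (1 + R) ^ n := pow_le_pow_right₀ (by linarith) hk.le
        simp only [hK]
        gcongr)
      (by
        intro y hy
        have e : Q n + ∑ i : Fin n, C (M i) * X ^ (i : ℕ) = X ^ n := by
          simp only [hQ]; rw [hl]; ring
        have h := congrArg (fun p => polyOp n w p y) e
        simp only [polyOp_add] at h
        rw [polyOp_X_pow n w n le_rfl, hode y hy] at h
        have hs : polyOp n w (∑ i : Fin n, C (M i) * X ^ (i : ℕ)) y =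
            ∑ i : Fin n, M i * iteratedDeriv (i : ℕ) w y := by
          have : ∀ s : Finset (Fin n), polyOp n w (∑ i ∈ s, C (M i) * X ^ (i : ℕ)) y =
            ∑ i ∈ s, M i * iteratedDeriv (i : ℕ) w y := by
            intro s
            induction s using Finset.induction_on with
            | empty => simp [polyOp]
            | insert a s ha ih =>
              rw [sum_insert ha, sum_insert ha, polyOp_add, ih, polyOp_C_mul,
                polyOp_X_pow n w _ a.2.le]
          exact this _
        rw [hs] at h
        simpa using h)
      (n - k) k (by omega) x hx
    refine hc.trans ?_
    have hs : ∑ i ∈ range (n - k), x ^ i ≤ n * (1 + x ^ (n - 1)) := by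
      calc _ ≤ ∑ i ∈ range n, x ^ i :=
            sum_le_sum_of_subset_of_nonneg (range_subset_range.2 (by omega))
              fun i _ _ => pow_nonneg hx i
        _ ≤ ∑ i ∈ range n, (1 + x ^ (n - 1)) := by
            refine sum_le_sum fun i hi => ?_
            have hi := mem_range.1 hi
            rcases le_total x 1 with h | h
            · have h1 := pow_le_one₀ (n := i) hx h
              have h2 := pow_nonneg hx (n - 1)
              linarith
            · have : x ^ i ≤ x ^ (n - 1) := pow_le_pow_right₀ h (by omega)
              linarith
        _ = _ := by simp [mul_add]
    rw [mul_assoc K (n : ℝ)]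
    gcongr
  have hfin : ∀ m k, m + k ≤ n → ‖polyOp n w (X ^ m * Q k) x‖ ≤ (1 + R) ^ m *
      (K * n * (1 + x ^ (n - 1)) * Real.exp (maxCharRootRe n M * x)) := by
    intro m
    induction m with
    | zero =>
      intro k hk
      simpa using hu k (by omega)
    | succ m ih =>
      intro k hk
      rw [hQs', polyOp_add, polyOp_C_mul]
      refine (norm_add_le _ _).trans ?_
      rw [norm_mul]
      have h1 := ih (k + 1) (by omega)
      have h2 := ih k (by omega)
      have h3 := mul_le_mul (hlR k (by omega)) h2 (norm_nonneg _) hR0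
      refine (add_le_add h3 h1).trans (le_of_eq ?_)
      ring
  have h := hfin i 0 (by omega)
  simp only [hQ, range_zero, prod_empty, mul_one] at h
  rw [polyOp_X_pow n w i hi.le] at h
  refine h.trans ?_
  have : (1 + R) ^ i ≤ (1 + R) ^ n := pow_le_pow_right₀ (by linarith) hi.le
  calc _ ≤ (1 + R) ^ n * (K * n * (1 + x ^ (n - 1)) * Real.exp (maxCharRootRe n M * x)) := by
        gcongr
    _ = _ := by ring
end

section
/- Let n ≥ 1 be a natural number and D_a ⊆ ℂⁿ a nonempty compact set such that for every (a₀, …, a_{n−1}) ∈ D_a, every root λ of the polynomial zⁿ + a_{n−1}z^{n−1} + … + a₁z + a₀ satisfies Re λ < 0. Then there exists κ > 0 such that for every (a₀, …, a_{n−1}) ∈ D_a and every root λ of zⁿ + a_{n−1}z^{n−1} + … + a₁z + a₀, one has Re λ ≤ −κ. -/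
/-- If `D_a ⊆ ℂⁿ` (`n ≥ 1`) is a nonempty compact set such that every root of
`zⁿ + a_{n−1}z^{n−1} + … + a₀` has negative real part for every `(a₀, …, a_{n−1}) ∈ D_a`,
then there is `κ > 0` such that every such root `λ` satisfies `Re λ ≤ −κ`. -/
theorem exists_uniform_negative_bound_on_root_re (n : ℕ) (hn : 1 ≤ n)
    (Da : Set (Fin n → ℂ)) (hne : Da.Nonempty) (hc : IsCompact Da)
    (hneg : ∀ a ∈ Da, ∀ l : ℂ, l ^ n + ∑ i : Fin n, a i * l ^ (i : ℕ) = 0 → l.re < 0) :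
    ∃ κ : ℝ, 0 < κ ∧
      ∀ a ∈ Da, ∀ l : ℂ, l ^ n + ∑ i : Fin n, a i * l ^ (i : ℕ) = 0 → l.re ≤ -κ := by
  obtain ⟨M, hM⟩ := hc.isBounded.exists_norm_le
  have hM0 : 0 ≤ M := by
    obtain ⟨a, ha⟩ := hne
    exact (norm_nonneg a).trans (hM a ha)
  have hroot : ∀ a ∈ Da, ∀ l : ℂ, l ^ n + ∑ i : Fin n, a i * l ^ (i : ℕ) = 0 →
      ‖l‖ ≤ n * M + 1 := by
    intro a ha l hl
    have hnM : 0 ≤ (n : ℝ) * M := by positivity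
    by_cases h1 : ‖l‖ ≤ 1
    · linarith
    have h1' : 1 < ‖l‖ := not_le.mp h1
    have e : l ^ n = -∑ i : Fin n, a i * l ^ (i : ℕ) := eq_neg_of_add_eq_zero_left hl
    have h2 : ‖l‖ ^ n ≤ ∑ i : Fin n, M * ‖l‖ ^ (n - 1) := by
      rw [← norm_pow, e, norm_neg]
      refine (norm_sum_le _ _).trans (Finset.sum_le_sum fun i _ => ?_)
      rw [norm_mul, norm_pow]
      have hi : (i : ℕ) ≤ n - 1 := by have := i.2; omega
      exact mul_le_mul ((norm_le_pi_norm a i).trans (hM a ha))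
        (pow_le_pow_right₀ h1'.le hi) (by positivity) hM0
    have h3 : ‖l‖ ^ n = ‖l‖ * ‖l‖ ^ (n - 1) := by
      rw [← pow_succ']
      congr 1
      omega
    rw [h3] at h2
    simp only [Finset.sum_const, Finset.card_univ, Fintype.card_fin, nsmul_eq_mul] at h2
    rw [← mul_assoc] at h2
    have h4 : 0 < ‖l‖ ^ (n - 1) := by positivity
    have := le_of_mul_le_mul_right h2 h4
    linarith
  have hS : IsCompact ((Da ×ˢ Metric.closedBall (0 : ℂ) (n * M + 1)) ∩
      {p : (Fin n → ℂ) × ℂ | p.2 ^ n + ∑ i : Fin n, p.1 i * p.2 ^ (i : ℕ) = 0}) := by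
    refine (hc.prod (isCompact_closedBall _ _)).inter_right (isClosed_eq ?_ continuous_const)
    fun_prop
  rcases Set.eq_empty_or_nonempty ((Da ×ˢ Metric.closedBall (0 : ℂ) (n * M + 1)) ∩
      {p : (Fin n → ℂ) × ℂ | p.2 ^ n + ∑ i : Fin n, p.1 i * p.2 ^ (i : ℕ) = 0}) with h0 | h0
  · refine ⟨1, one_pos, fun a ha l hl => ?_⟩
    have : (a, l) ∈ (∅ : Set ((Fin n → ℂ) × ℂ)) := by
      rw [← h0]
      exact ⟨⟨ha, by simpa using hroot a ha l hl⟩, hl⟩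
    exact this.elim
  · obtain ⟨p, hp, hmax⟩ := hS.exists_isMaxOn h0
      (f := fun p => p.2.re) (by fun_prop)
    refine ⟨-p.2.re, neg_pos.mpr (hneg p.1 hp.1.1 p.2 hp.2), fun a ha l hl => ?_⟩
    rw [neg_neg]
    exact hmax (a := (a, l)) ⟨⟨ha, by simpa using hroot a ha l hl⟩, hl⟩
end

section
/- Let S = {(x, y) ∈ ℝ² : x² + y² = 1} be the unit circle in the plane. For every nonempty subset K ⊆ S, the set (ℝ² \ S) ∪ K is path-connected. -/
lemma ext_pathConnected :
    IsPathConnected {p : ℝ × ℝ | 1 < p.1 ^ 2 + p.2 ^ 2} := by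
  have h0 : IsPathConnected ({0}ᶜ : Set (ℝ × ℝ)) := by
    apply isPathConnected_compl_singleton_of_one_lt_rank
    rw [rank_prod', Module.rank_self]
    exact_mod_cast one_lt_two
  have hpos : ∀ p : ℝ × ℝ, p ∈ ({0}ᶜ : Set (ℝ × ℝ)) → 0 < p.1 ^ 2 + p.2 ^ 2 := by
    rintro ⟨a, b⟩ h
    by_contra hn
    apply h
    have ha : a = 0 := by
      have : 0 ≤ b ^ 2 := sq_nonneg b
      simp only [not_lt] at hn
      nlinarith
    have hb : b = 0 := by
      have : 0 ≤ a ^ 2 := sq_nonneg a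
      simp only [not_lt] at hn
      nlinarith
    simp [ha, hb]
  have himg : {p : ℝ × ℝ | 1 < p.1 ^ 2 + p.2 ^ 2} =
      (fun p : ℝ × ℝ => (1 + (Real.sqrt (p.1 ^ 2 + p.2 ^ 2))⁻¹) • p) '' ({0}ᶜ : Set (ℝ × ℝ)) := by
    ext q
    simp only [Set.mem_image, Set.mem_ofPred_eq]
    constructor
    · intro hq
      obtain ⟨r, hr⟩ : ∃ r, r = Real.sqrt (q.1 ^ 2 + q.2 ^ 2) := ⟨_, rfl⟩
      have hr2 : r ^ 2 = q.1 ^ 2 + q.2 ^ 2 := by rw [hr, Real.sq_sqrt (by linarith)]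
      have hr1 : 1 < r := by
        rw [hr]; exact Real.lt_sqrt_of_sq_lt (by simpa using hq)
      have hs : Real.sqrt (((1 - r⁻¹) * q.1) ^ 2 + ((1 - r⁻¹) * q.2) ^ 2) = r - 1 := by
        rw [show ((1 - r⁻¹) * q.1) ^ 2 + ((1 - r⁻¹) * q.2) ^ 2 = (r - 1) ^ 2 by
          rw [mul_pow, mul_pow, ← mul_add, ← hr2]; field_simp]
        exact Real.sqrt_sq (by linarith)
      refine ⟨(1 - r⁻¹) • q, ?_, ?_⟩
      · intro h
        have h' : (1 - r⁻¹) • q = 0 := h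
        have e1 : (1 - r⁻¹) * q.1 = 0 := congrArg Prod.fst h'
        have e2 : (1 - r⁻¹) * q.2 = 0 := congrArg Prod.snd h'
        rw [e1, e2] at hs
        simp at hs
        linarith
      · simp only [Prod.smul_fst, Prod.smul_snd, smul_eq_mul]
        rw [hs, smul_smul]
        have : r - 1 ≠ 0 := by linarith
        rw [show (1 + (r - 1)⁻¹) * (1 - r⁻¹) = 1 by field_simp; ring, one_smul]
    · rintro ⟨p, hp, rfl⟩
      have h := hpos p hp
      have hs := Real.sqrt_pos.2 h
      have h2 := Real.sq_sqrt h.le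
      generalize Real.sqrt (p.1 ^ 2 + p.2 ^ 2) = r at *
      simp only [Prod.smul_fst, Prod.smul_snd, smul_eq_mul]
      rw [mul_pow, mul_pow, ← mul_add, ← h2, show (1 + r⁻¹) ^ 2 * r ^ 2 = (r + 1) ^ 2 by
        field_simp]
      nlinarith
  rw [himg]
  apply h0.image'
  refine ContinuousOn.fun_smul (continuousOn_const.fun_add
    (ContinuousOn.fun_inv₀ (by fun_prop) ?_)) continuousOn_id
  intro p hp
  exact (Real.sqrt_pos.2 (hpos p hp)).ne'

lemma joined_smul {s : Set (ℝ × ℝ)} (q : ℝ × ℝ)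
    (h : ∀ t : ℝ, 0 ≤ t → t ≤ 1 → t • q ∈ s) : JoinedIn s 0 q := by
  apply JoinedIn.of_segment_subset
  rw [segment_eq_image]
  rintro _ ⟨t, ⟨h0, h1⟩, rfl⟩
  simpa using h t h0 h1

/-- Let `S` be the unit circle in the plane. For every nonempty `K ⊆ S`, the set
`(ℝ² \ S) ∪ K` is path-connected. -/
theorem pathConnected_compl_circle_union (K : Set (ℝ × ℝ))
    (hK : K ⊆ {p : ℝ × ℝ | p.1 ^ 2 + p.2 ^ 2 = 1}) (hne : K.Nonempty) :
    IsPathConnected ({p : ℝ × ℝ | p.1 ^ 2 + p.2 ^ 2 = 1}ᶜ ∪ K) := by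
  obtain ⟨k, hk⟩ := hne
  have hk1 : k.1 ^ 2 + k.2 ^ 2 = 1 := hK hk
  refine ⟨0, Or.inl (by simp), ?_⟩
  intro q hq
  rcases le_or_gt (q.1 ^ 2 + q.2 ^ 2) 1 with h | h
  · apply joined_smul
    intro t h0 h1
    rcases h1.eq_or_lt with rfl | h1
    · simpa using hq
    · left
      simp only [Set.mem_compl_iff, Set.mem_ofPred_eq, Prod.smul_fst, Prod.smul_snd, smul_eq_mul]
      rw [mul_pow, mul_pow, ← mul_add]
      have : 0 ≤ q.1 ^ 2 + q.2 ^ 2 := by positivity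
      have : t ^ 2 < 1 := by nlinarith
      nlinarith
  · have j1 : JoinedIn ({p : ℝ × ℝ | p.1 ^ 2 + p.2 ^ 2 = 1}ᶜ ∪ K) 0 ((2 : ℝ) • k) := by
      apply joined_smul
      intro t h0 h1
      rw [smul_smul]
      by_cases ht : t * 2 = 1
      · right; simpa [ht] using hk
      · left
        simp only [Set.mem_compl_iff, Set.mem_ofPred_eq, Prod.smul_fst, Prod.smul_snd, smul_eq_mul]
        intro h2
        have h3 : (t * 2 - 1) * (t * 2 + 1) = 0 := by
          linear_combination h2 - (t * 2) ^ 2 * hk1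
        rcases mul_eq_zero.1 h3 with h | h
        · exact ht (by linarith)
        · linarith
    refine j1.trans ((ext_pathConnected.joinedIn _ ?_ q h).mono ?_)
    · simp only [Set.mem_ofPred_eq, Prod.smul_fst, Prod.smul_snd, smul_eq_mul]
      nlinarith
    · intro p hp
      left
      exact ne_of_gt hp
end

section
/- Let M₁ = {(x, y) ∈ ℝ² : x² + (y − 1)² = 1} and M₂ = {(x, y) ∈ ℝ² : x² + (y + 1)² = 1} be the circles of radius 1 centered at (0, 1) and (0, −1), and set M = M₁ ∪ M₂. If K ⊆ M is a set containing at least one point of M₁ and at least one point of M₂, then the set (ℝ² \ M) ∪ K is path-connected. -/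
lemma tc_seg (S : Set (ℝ × ℝ)) (a b c d : ℝ) (hp : (a, b) ∈ S)
    (h : ∀ t : ℝ, 0 < t → t ≤ 1 → (a + t * (c - a), b + t * (d - b)) ∈ S) :
    JoinedIn S (a, b) (c, d) := by
  apply JoinedIn.of_segment_subset
  rw [segment_eq_image']
  rintro _ ⟨t, ⟨h0, h1⟩, rfl⟩
  rcases h0.eq_or_lt with rfl | h0
  · simpa using hp
  · simpa using h t h0 h1

/-- Let `M₁` and `M₂` be the unit circles centered at `(0, 1)` and `(0, −1)`, and
`M = M₁ ∪ M₂`. If `K ⊆ M` contains a point of `M₁` and a point of `M₂`, then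
`(ℝ² \ M) ∪ K` is path-connected. -/
theorem pathConnected_compl_two_circles_union (K : Set (ℝ × ℝ))
    (hK : K ⊆ {p : ℝ × ℝ | p.1 ^ 2 + (p.2 - 1) ^ 2 = 1} ∪
      {p : ℝ × ℝ | p.1 ^ 2 + (p.2 + 1) ^ 2 = 1})
    (h1 : ∃ z ∈ K, z ∈ {p : ℝ × ℝ | p.1 ^ 2 + (p.2 - 1) ^ 2 = 1})
    (h2 : ∃ z ∈ K, z ∈ {p : ℝ × ℝ | p.1 ^ 2 + (p.2 + 1) ^ 2 = 1}) :
    IsPathConnected (({p : ℝ × ℝ | p.1 ^ 2 + (p.2 - 1) ^ 2 = 1} ∪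
      {p : ℝ × ℝ | p.1 ^ 2 + (p.2 + 1) ^ 2 = 1})ᶜ ∪ K) := by
  set S := (({p : ℝ × ℝ | p.1 ^ 2 + (p.2 - 1) ^ 2 = 1} ∪
      {p : ℝ × ℝ | p.1 ^ 2 + (p.2 + 1) ^ 2 = 1})ᶜ ∪ K) with hS
  have mem : ∀ x y : ℝ, x ^ 2 + (y - 1) ^ 2 ≠ 1 → x ^ 2 + (y + 1) ^ 2 ≠ 1 → (x, y) ∈ S := by
    intro x y h h'
    left
    simp only [Set.mem_compl_iff, Set.mem_union, Set.mem_setOf_eq, not_or]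
    exact ⟨h, h'⟩
  have memK : ∀ p ∈ K, p ∈ S := fun p hp => Or.inr hp
  have b1 : JoinedIn S (3, 0) (0, 5) := by
    apply tc_seg
    · apply mem <;> norm_num
    · intro t h0 h1
      apply mem <;> apply ne_of_gt <;> nlinarith [sq_nonneg (t - 1/2)]
  have b2 : JoinedIn S (-3, 0) (0, 5) := by
    apply tc_seg
    · apply mem <;> norm_num
    · intro t h0 h1
      apply mem <;> apply ne_of_gt <;> nlinarith [sq_nonneg (t - 1/2)]
  have ext : ∀ x y : ℝ, (x, y) ∈ S → 1 ≤ x ^ 2 + (y - 1) ^ 2 → 1 ≤ x ^ 2 + (y + 1) ^ 2 →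
      JoinedIn S (x, y) (0, 5) := by
    intro x y hp h1 h2
    rcases le_total 0 x with hx | hx
    · have j1 : JoinedIn S (x, y) (x + 3, y) := by
        apply tc_seg _ _ _ _ _ hp
        intro t h0 _
        have := mul_nonneg hx h0.le
        apply mem <;> apply ne_of_gt <;> nlinarith
      have j2 : JoinedIn S (x + 3, y) (3, 0) := by
        apply tc_seg
        · exact j1.target_mem
        · intro t h0 h1
          have h3 : 3 ≤ x + 3 + t * (3 - (x + 3)) := by nlinarith
          apply mem <;> apply ne_of_gt <;>
            nlinarith [sq_nonneg (y + t * (0 - y) - 1), sq_nonneg (y + t * (0 - y) + 1)]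
      exact (j1.trans j2).trans b1
    · have j1 : JoinedIn S (x, y) (x - 3, y) := by
        apply tc_seg _ _ _ _ _ hp
        intro t h0 _
        have := mul_nonneg (neg_nonneg.2 hx) h0.le
        apply mem <;> apply ne_of_gt <;> nlinarith
      have j2 : JoinedIn S (x - 3, y) (-3, 0) := by
        apply tc_seg
        · exact j1.target_mem
        · intro t h0 h1
          have h3 : x - 3 + t * (-3 - (x - 3)) ≤ -3 := by nlinarith
          apply mem <;> apply ne_of_gt <;>
            nlinarith [sq_nonneg (y + t * (0 - y) - 1), sq_nonneg (y + t * (0 - y) + 1)]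
      exact (j1.trans j2).trans b2
  have in1 : ∀ x y : ℝ, (x, y) ∈ S → x ^ 2 + (y - 1) ^ 2 ≤ 1 → JoinedIn S (x, y) (0, 1) := by
    intro x y hp h
    apply tc_seg _ _ _ _ _ hp
    intro t h0 h1
    have key : (x + t * (0 - x)) ^ 2 + (y + t * (1 - y) - 1) ^ 2 < 1 := by
      have e : (x + t * (0 - x)) ^ 2 + (y + t * (1 - y) - 1) ^ 2
        = (1 - t) ^ 2 * (x ^ 2 + (y - 1) ^ 2) := by ring
      rw [e]
      nlinarith [mul_le_mul_of_nonneg_left h (sq_nonneg (1 - t))]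
    apply mem
    · exact key.ne
    · apply ne_of_gt
      nlinarith [sq_nonneg (x + t * (0 - x)), sq_nonneg (y + t * (1 - y))]
  have in2 : ∀ x y : ℝ, (x, y) ∈ S → x ^ 2 + (y + 1) ^ 2 ≤ 1 → JoinedIn S (x, y) (0, -1) := by
    intro x y hp h
    apply tc_seg _ _ _ _ _ hp
    intro t h0 h1
    have key : (x + t * (0 - x)) ^ 2 + (y + t * (-1 - y) + 1) ^ 2 < 1 := by
      have e : (x + t * (0 - x)) ^ 2 + (y + t * (-1 - y) + 1) ^ 2
        = (1 - t) ^ 2 * (x ^ 2 + (y + 1) ^ 2) := by ring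
      rw [e]
      nlinarith [mul_le_mul_of_nonneg_left h (sq_nonneg (1 - t))]
    apply mem
    · apply ne_of_gt
      nlinarith [sq_nonneg (x + t * (0 - x)), sq_nonneg (y + t * (-1 - y))]
    · exact key.ne
  have c1 : JoinedIn S (0, 1) (0, 5) := by
    obtain ⟨⟨x, y⟩, hz, h⟩ := h1
    simp only [Set.mem_setOf_eq] at h
    exact (in1 x y (memK _ hz) h.le).symm.trans
      (ext x y (memK _ hz) h.ge (by nlinarith [sq_nonneg x, sq_nonneg y]))
  have c2 : JoinedIn S (0, -1) (0, 5) := by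
    obtain ⟨⟨x, y⟩, hz, h⟩ := h2
    simp only [Set.mem_setOf_eq] at h
    exact (in2 x y (memK _ hz) h.le).symm.trans
      (ext x y (memK _ hz) (by nlinarith [sq_nonneg x, sq_nonneg y]) h.ge)
  refine ⟨(0, 5), b1.target_mem, ?_⟩
  rintro ⟨x, y⟩ hp
  apply JoinedIn.symm
  by_cases g1 : x ^ 2 + (y - 1) ^ 2 ≤ 1
  · exact (in1 x y hp g1).trans c1
  by_cases g2 : x ^ 2 + (y + 1) ^ 2 ≤ 1
  · exact (in2 x y hp g2).trans c2
  exact ext x y hp (not_le.1 g1).le (not_le.1 g2).le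
end
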